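/- Let W be a rectilinear polygonal environment with free space F, fix points s_A,s_B,t_A,t_B ∈ F, let R be a corridor, and let γ(R), R↔⁺, R↔⁻ be as in the context. If p,q ∈ γ(R) both lie in R↔⁺, or both lie in R↔⁻, then every shortest path in F from p to q is x-monotone. -/

import Mathlib

open Set
open scoped ENNReal

noncomputable section

/-- The ℓ∞ norm of a point of `ℝ²`. -/
def linf (p : ℝ × ℝ) : ℝ := max |p.1| |p.2|

/-- The ℓ₁ norm of a point of `ℝ²`. -/
def l1 (p : ℝ × ℝ) : ℝ := |p.1| + |p.2|

/-- The Euclidean distance between two points of `ℝ²`. -/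
def euclDist (p q : ℝ × ℝ) : ℝ := Real.sqrt ((p.1 - q.1) ^ 2 + (p.2 - q.2) ^ 2)

/-- A closed axis-aligned rectangle with nonempty interior. -/
def IsClosedAxisRect (S : Set (ℝ × ℝ)) : Prop :=
  ∃ a b c d : ℝ, a < b ∧ c < d ∧ S = Icc a b ×ˢ Icc c d

/-- A rectilinear polygonal environment: a nonempty compact subset of the plane that is a
finite union of closed axis-aligned rectangles with nonempty interior, and that equals the
closure of its interior. -/
def IsRectilinearEnv (W : Set (ℝ × ℝ)) : Prop :=
  W.Nonempty ∧ IsCompact W ∧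
    (∃ 𝓡 : Finset (Set (ℝ × ℝ)), (∀ S ∈ 𝓡, IsClosedAxisRect S) ∧ W = ⋃ S ∈ 𝓡, S) ∧
    W = closure (interior W)

/-- The free space of a workspace `W`: placements of the center of a closed axis-aligned
unit square keeping the square inside `W`. -/
def freeSpace (W : Set (ℝ × ℝ)) : Set (ℝ × ℝ) :=
  {p | ∀ q : ℝ × ℝ, linf q ≤ 1 / 2 → p + q ∈ W}

/-- A free configuration of the two robots. -/
def FreeConf (F : Set (ℝ × ℝ)) (c : (ℝ × ℝ) × (ℝ × ℝ)) : Prop :=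
  c.1 ∈ F ∧ c.2 ∈ F ∧ 1 ≤ linf (c.1 - c.2)

/-- The ℓ₁-length (total variation w.r.t. the metric induced by the ℓ₁-norm) of a planar
path on a set of times. -/
def l1VarOn (γ : ℝ → ℝ × ℝ) (s : Set ℝ) : ℝ≥0∞ :=
  eVariationOn (fun t => (WithLp.equiv 1 (ℝ × ℝ)).symm (γ t)) s

/-- An `(s,t)`-plan: a continuous map on `[0,1]` from `s` to `t`. -/
def IsPlan (s t : (ℝ × ℝ) × (ℝ × ℝ)) (pln : ℝ → (ℝ × ℝ) × (ℝ × ℝ)) : Prop :=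
  ContinuousOn pln (Icc 0 1) ∧ pln 0 = s ∧ pln 1 = t

/-- A plan is feasible if every configuration along it is free. -/
def Feasible (F : Set (ℝ × ℝ)) (pln : ℝ → (ℝ × ℝ) × (ℝ × ℝ)) : Prop :=
  ∀ lam ∈ Icc (0 : ℝ) 1, FreeConf F (pln lam)

/-- The cost of a plan: the sum of the ℓ₁-lengths of the two robot paths. -/
def planCost (pln : ℝ → (ℝ × ℝ) × (ℝ × ℝ)) : ℝ≥0∞ :=
  l1VarOn (fun t => (pln t).1) (Icc 0 1) + l1VarOn (fun t => (pln t).2) (Icc 0 1)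

/-- An optimal `(s,t)`-plan: feasible, and of cost at most that of every feasible plan. -/
def IsOptimalPlan (F : Set (ℝ × ℝ)) (s t : (ℝ × ℝ) × (ℝ × ℝ))
    (pln : ℝ → (ℝ × ℝ) × (ℝ × ℝ)) : Prop :=
  IsPlan s t pln ∧ Feasible F pln ∧
    ∀ pln', IsPlan s t pln' → Feasible F pln' → planCost pln ≤ planCost pln'

/-- A decoupled plan: `[0,1]` splits into finitely many subintervals on each of which
one of the two robots is parked. -/
def IsDecoupled (pln : ℝ → (ℝ × ℝ) × (ℝ × ℝ)) : Prop :=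
  ∃ (n : ℕ) (τ : ℕ → ℝ), τ 0 = 0 ∧ τ n = 1 ∧ (∀ i, i < n → τ i ≤ τ (i + 1)) ∧
    ∀ i, i < n →
      (∀ a ∈ Icc (τ i) (τ (i + 1)), (pln a).1 = (pln (τ i)).1) ∨
      (∀ a ∈ Icc (τ i) (τ (i + 1)), (pln a).2 = (pln (τ i)).2)

/-- A rectilinear path: piecewise linear, with every linear piece horizontal or vertical. -/
def IsRectilinearPath (γ : ℝ → ℝ × ℝ) : Prop :=
  ∃ (n : ℕ) (τ : ℕ → ℝ), τ 0 = 0 ∧ τ n = 1 ∧ (∀ i, i < n → τ i ≤ τ (i + 1)) ∧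
    ∀ i, i < n → ∃ v : ℝ × ℝ, (v.1 = 0 ∨ v.2 = 0) ∧
      ∀ a ∈ Icc (τ i) (τ (i + 1)), γ a = γ (τ i) + (a - τ i) • v

/-- A rectilinear plan: both robot paths are rectilinear. -/
def IsRectilinearPlan (pln : ℝ → (ℝ × ℝ) × (ℝ × ℝ)) : Prop :=
  IsRectilinearPath (fun t => (pln t).1) ∧ IsRectilinearPath (fun t => (pln t).2)

/-- An alternating path: horizontal and vertical pieces (possibly of zero length)
alternate. -/
def IsAlternatingPath (γ : ℝ → ℝ × ℝ) : Prop :=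
  ∃ (n : ℕ) (τ : ℕ → ℝ) (d : ℕ → Bool), τ 0 = 0 ∧ τ n = 1 ∧
    (∀ i, i < n → τ i ≤ τ (i + 1)) ∧
    (∀ i, i + 1 < n → d (i + 1) = !d i) ∧
    ∀ i, i < n → ∃ v : ℝ × ℝ,
      (if d i = true then v.2 = 0 else v.1 = 0) ∧
      ∀ a ∈ Icc (τ i) (τ (i + 1)), γ a = γ (τ i) + (a - τ i) • v

/-- An alternating plan. -/
def IsAlternatingPlan (pln : ℝ → (ℝ × ℝ) × (ℝ × ℝ)) : Prop :=
  IsAlternatingPath (fun t => (pln t).1) ∧ IsAlternatingPath (fun t => (pln t).2)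

/-- `y` is the height of a horizontal edge of `∂F`. -/
def IsHorizEdgeY (F : Set (ℝ × ℝ)) (y : ℝ) : Prop :=
  ∃ a b : ℝ, a < b ∧ (Icc a b ×ˢ ({y} : Set ℝ)) ⊆ frontier F

/-- `x` is the abscissa of a vertical edge of `∂F`. -/
def IsVertEdgeX (F : Set (ℝ × ℝ)) (x : ℝ) : Prop :=
  ∃ a b : ℝ, a < b ∧ (({x} : Set ℝ) ×ˢ Icc a b) ⊆ frontier F

/-- `y` is the height of a horizontal `i`-line for some `i ≤ k` (w.r.t. the free space `F`
and the set `P` of the four source/target points). -/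
def IsHorizLineY (F : Set (ℝ × ℝ)) (P : Set (ℝ × ℝ)) (k : ℕ) (y : ℝ) : Prop :=
  ∃ i : ℕ, i ≤ k ∧
    ((∃ y₀ : ℝ, IsHorizEdgeY F y₀ ∧ |y - y₀| = (i : ℝ)) ∨ ∃ p ∈ P, |y - p.2| = (i : ℝ))

/-- `x` is the abscissa of a vertical `i`-line for some `i ≤ k`. -/
def IsVertLineX (F : Set (ℝ × ℝ)) (P : Set (ℝ × ℝ)) (k : ℕ) (x : ℝ) : Prop :=
  ∃ i : ℕ, i ≤ k ∧
    ((∃ x₀ : ℝ, IsVertEdgeX F x₀ ∧ |x - x₀| = (i : ℝ)) ∨ ∃ p ∈ P, |x - p.1| = (i : ℝ))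

/-- A grid point: a point of `F` lying on a horizontal grid line and a vertical grid line. -/
def IsGridPoint (F : Set (ℝ × ℝ)) (P : Set (ℝ × ℝ)) (u : ℝ × ℝ) : Prop :=
  u ∈ F ∧ IsHorizLineY F P 2 u.2 ∧ IsVertLineX F P 2 u.1

/-- A grid edge: a closed segment in `F` joining two grid points on a common grid line, with
no grid point in its relative interior. -/
def IsGridEdge (F P : Set (ℝ × ℝ)) (u v : ℝ × ℝ) : Prop :=
  IsGridPoint F P u ∧ IsGridPoint F P v ∧ (u.1 = v.1 ∨ u.2 = v.2) ∧
    segment ℝ u v ⊆ F ∧ ∀ w ∈ openSegment ℝ u v, ¬ IsGridPoint F P w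

/-- A vertex of the configuration graph. -/
def ConfVertex (F P : Set (ℝ × ℝ)) (u : (ℝ × ℝ) × (ℝ × ℝ)) : Prop :=
  IsGridPoint F P u.1 ∧ IsGridPoint F P u.2 ∧ 1 ≤ linf (u.1 - u.2)

/-- An edge of the configuration graph. -/
def ConfEdge (F P : Set (ℝ × ℝ)) (u v : (ℝ × ℝ) × (ℝ × ℝ)) : Prop :=
  ConfVertex F P u ∧ ConfVertex F P v ∧
    ((u.1 = v.1 ∧ IsGridEdge F P u.2 v.2) ∨ (u.2 = v.2 ∧ IsGridEdge F P u.1 v.1))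

/-- A path in `S` from `p` to `q`. -/
def IsPathIn (S : Set (ℝ × ℝ)) (p q : ℝ × ℝ) (γ : ℝ → ℝ × ℝ) : Prop :=
  ContinuousOn γ (Icc 0 1) ∧ γ 0 = p ∧ γ 1 = q ∧ ∀ t ∈ Icc (0 : ℝ) 1, γ t ∈ S

/-- The ℓ₁-length of a path parameterized over `[0,1]`. -/
def pathLen (γ : ℝ → ℝ × ℝ) : ℝ≥0∞ := l1VarOn γ (Icc 0 1)

/-- A shortest path in `S` from `p` to `q` (w.r.t. ℓ₁-length). -/
def IsShortestPathIn (S : Set (ℝ × ℝ)) (p q : ℝ × ℝ) (γ : ℝ → ℝ × ℝ) : Prop :=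
  IsPathIn S p q γ ∧ ∀ γ', IsPathIn S p q γ' → pathLen γ ≤ pathLen γ'

/-- An x-monotone path. -/
def XMonotone (γ : ℝ → ℝ × ℝ) : Prop :=
  MonotoneOn (fun t => (γ t).1) (Icc 0 1) ∨ AntitoneOn (fun t => (γ t).1) (Icc 0 1)

/-- A y-monotone path. -/
def YMonotone (γ : ℝ → ℝ × ℝ) : Prop :=
  MonotoneOn (fun t => (γ t).2) (Icc 0 1) ∨ AntitoneOn (fun t => (γ t).2) (Icc 0 1)

/-- An xy-monotone path. -/
def XYMonotone (γ : ℝ → ℝ × ℝ) : Prop := XMonotone γ ∧ YMonotone γ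

/-- The union of the primary horizontal lines (horizontal 0-lines and 1-lines). -/
def primaryHorizSet (F P : Set (ℝ × ℝ)) : Set (ℝ × ℝ) :=
  {p | IsHorizLineY F P 1 p.2}

/-- A corridor: the closure of a connected component of `F` minus the primary horizontal
lines. -/
def IsCorridor (F P : Set (ℝ × ℝ)) (R : Set (ℝ × ℝ)) : Prop :=
  ∃ c ∈ F \ primaryHorizSet F P,
    R = closure (connectedComponentIn (F \ primaryHorizSet F P) c)

/-- `C` is a connected component of `S`. -/
def IsCompOf (S C : Set (ℝ × ℝ)) : Prop := ∃ c ∈ S, C = connectedComponentIn S c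

/-- An x-separated configuration. -/
def XSep (c : (ℝ × ℝ) × (ℝ × ℝ)) : Prop := 1 ≤ |c.1.1 - c.2.1|

/-- A y-separated configuration. -/
def YSep (c : (ℝ × ℝ) × (ℝ × ℝ)) : Prop := 1 ≤ |c.1.2 - c.2.2|

/-- Two configurations have the same x-order. -/
def SameXOrder (c d : (ℝ × ℝ) × (ℝ × ℝ)) : Prop :=
  Real.sign (c.1.1 - c.2.1) = Real.sign (d.1.1 - d.2.1)

/-- Two configurations have the same y-order. -/
def SameYOrder (c d : (ℝ × ℝ) × (ℝ × ℝ)) : Prop :=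
  Real.sign (c.1.2 - c.2.2) = Real.sign (d.1.2 - d.2.2)

/-- During `[a,b]` the path `γ` traverses (affinely) a straight axis-parallel segment
contained in `F` whose endpoints are grid points. -/
def MoveSeg (F P : Set (ℝ × ℝ)) (γ : ℝ → ℝ × ℝ) (a b : ℝ) : Prop :=
  IsGridPoint F P (γ a) ∧ IsGridPoint F P (γ b) ∧
    segment ℝ (γ a) (γ b) ⊆ F ∧
    ∃ v : ℝ × ℝ, (v.1 = 0 ∨ v.2 = 0) ∧ ∀ t ∈ Icc a b, γ t = γ a + (t - a) • v

/-- A canonical-grid plan: a rectilinear decoupled plan that is a finite concatenation of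
moves in each of which one robot is parked at a grid point while the other traverses a
straight axis-parallel segment of the grid contained in `F`; in particular, every
breakpoint of either robot path is a grid point. -/
def IsCanonicalGridPlan (F P : Set (ℝ × ℝ)) (pln : ℝ → (ℝ × ℝ) × (ℝ × ℝ)) : Prop :=
  IsRectilinearPlan pln ∧ IsDecoupled pln ∧
    ∃ (n : ℕ) (τ : ℕ → ℝ), τ 0 = 0 ∧ τ n = 1 ∧ (∀ i, i < n → τ i ≤ τ (i + 1)) ∧
      ∀ i, i < n →
        (IsGridPoint F P (pln (τ i)).1 ∧
            (∀ a ∈ Icc (τ i) (τ (i + 1)), (pln a).1 = (pln (τ i)).1) ∧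
            MoveSeg F P (fun t => (pln t).2) (τ i) (τ (i + 1))) ∨
        (IsGridPoint F P (pln (τ i)).2 ∧
            (∀ a ∈ Icc (τ i) (τ (i + 1)), (pln a).2 = (pln (τ i)).2) ∧
            MoveSeg F P (fun t => (pln t).1) (τ i) (τ (i + 1)))

/-- A path in the configuration graph from `s` to `t` with `k` edges. -/
def IsGraphPath (F P : Set (ℝ × ℝ)) (s t : (ℝ × ℝ) × (ℝ × ℝ)) (k : ℕ)
    (u : ℕ → (ℝ × ℝ) × (ℝ × ℝ)) : Prop :=
  u 0 = s ∧ u k = t ∧ ∀ j, j < k → ConfEdge F P (u j) (u (j + 1))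

/-- The total weight (ℓ₁-distance in `ℝ⁴`) of a path in the configuration graph. -/
def graphPathWeight (k : ℕ) (u : ℕ → (ℝ × ℝ) × (ℝ × ℝ)) : ℝ :=
  ∑ j ∈ Finset.range k, (l1 ((u (j + 1)).1 - (u j).1) + l1 ((u (j + 1)).2 - (u j).2))

/-- `pln` traverses the edges of the graph path `u` one after another (linearly
interpolating along each edge). -/
def IsEdgeTraversal (pln : ℝ → (ℝ × ℝ) × (ℝ × ℝ)) (k : ℕ)
    (u : ℕ → (ℝ × ℝ) × (ℝ × ℝ)) : Prop :=
  (k = 0 → ∀ a ∈ Icc (0 : ℝ) 1, pln a = u 0) ∧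
    ∀ j, j < k → ∀ a ∈ Icc ((j : ℝ) / k) (((j : ℝ) + 1) / k),
      pln a = u j + ((a - (j : ℝ) / k) * k) • (u (j + 1) - u j)

/-- A blocked pair for the corridor `[xlo,xhi] × [ylo,yhi]`. -/
def BlockedPair (F : Set (ℝ × ℝ)) (xlo xhi ylo yhi : ℝ) (u v : ℝ × ℝ) : Prop :=
  ∃ ρ ρ' edge : Set (ℝ × ℝ),
    ((ρ = Ico (xlo - 1) xlo ×ˢ Ico (ylo - 1) ylo ∧
        ρ' = Ico (xlo - 1) xlo ×ˢ Ioc yhi (yhi + 1) ∧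
        edge = ({xlo} : Set ℝ) ×ˢ Icc (ylo - 1) (yhi + 1)) ∨
      (ρ = Ioc xhi (xhi + 1) ×ˢ Ico (ylo - 1) ylo ∧
        ρ' = Ioc xhi (xhi + 1) ×ˢ Ioc yhi (yhi + 1) ∧
        edge = ({xhi} : Set ℝ) ×ˢ Icc (ylo - 1) (yhi + 1))) ∧
    ∃ φ φ' : Set (ℝ × ℝ), IsCompOf (ρ ∩ F) φ ∧ IsCompOf (ρ' ∩ F) φ' ∧
      (closure φ ∩ edge).Nonempty ∧ (closure φ' ∩ edge).Nonempty ∧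
      ((u ∈ φ ∧ v ∈ φ') ∨ (u ∈ φ' ∧ v ∈ φ))

/-- `[ν₁,ν₂] ⊆ [lam1,lam2]` is an unsafe interval for the plan `pln` w.r.t. the influence
region `IR`. -/
def IsUnsafeInterval (IR : Set (ℝ × ℝ)) (pln : ℝ → (ℝ × ℝ) × (ℝ × ℝ))
    (lam1 lam2 ν₁ ν₂ : ℝ) : Prop :=
  lam1 ≤ ν₁ ∧ ν₁ ≤ ν₂ ∧ ν₂ ≤ lam2 ∧
    (∀ ν ∈ Icc ν₁ ν₂, (pln ν).2 ∈ IR ∧ YSep (pln ν)) ∧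
    (∀ a b : ℝ, lam1 ≤ a → a ≤ ν₁ → ν₂ ≤ b → b ≤ lam2 →
      (∀ ν ∈ Icc a b, (pln ν).2 ∈ IR ∧ YSep (pln ν)) → a = ν₁ ∧ b = ν₂) ∧
    ∃ ν ∈ Icc ν₁ ν₂, ¬ XSep (pln ν)

/-!
Every point outside the free space `F` lies in an open square of side greater than `1` that misses
`F`. Hence two points of `F` on a common axis-parallel line at distance at most `1` see each other.
A path that is not x-monotone visits some abscissa at two times and leaves it in between; if it is a
shortest path, these two points do not see each other, so their heights differ by more than `1`.
This forces the length of the path to exceed `|p₁ - q₁| + 2 - |p₂ - q₂|`.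

It remains to join `p` and `q` within that length. Since both are at most `1` above the corridor,
say, it suffices to descend from each of them to its top side without any detour. From a point `q`
of the giant component above and to the right of the corridor, move to the left and downwards in `F`
until this is no longer possible. If the descent gets stuck at `z` before reaching the abscissa of
the right side, then the corridor corner, the obstacles to the left of `z` and below `z`, and the
wall beside the corridor confine the giant component to the quadrant above and to the right of `z`.
But the giant component contains the corridor.
-/

open AffineMap (lineMap)
open scoped Topology

/-! ### The intrinsic `ℓ₁`-distance -/

section PathDistance

variable {S : Set (ℝ × ℝ)} {u v w : ℝ × ℝ}

theorem l1_nonneg (u : ℝ × ℝ) : 0 ≤ l1 u :=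
  add_nonneg (abs_nonneg _) (abs_nonneg _)

theorem l1_sub_comm (u v : ℝ × ℝ) : l1 (u - v) = l1 (v - u) :=
  congrArg₂ (· + ·) (abs_sub_comm _ _) (abs_sub_comm _ _)

theorem l1_sub_add_l1_sub_of_mem_uIcc (h : v ∈ uIcc u w) :
    l1 (u - v) + l1 (v - w) = l1 (u - w) := by
  have dist_add (a b c : ℝ) (hb : b ∈ uIcc a c) : |a - b| + |b - c| = |a - c| :=
    dist_add_dist_of_mem_segment (segment_eq_uIcc a c ▸ hb)
  rw [uIcc_prod_eq] at h
  simp only [l1, Prod.fst_sub, Prod.snd_sub]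
  rw [← dist_add _ _ _ h.1, ← dist_add _ _ _ h.2]
  ring

theorem edist_equiv_symm_eq_ofReal_l1 (u v : ℝ × ℝ) :
    edist ((WithLp.equiv 1 (ℝ × ℝ)).symm u) ((WithLp.equiv 1 (ℝ × ℝ)).symm v) =
      ENNReal.ofReal (l1 (u - v)) := by
  rw [WithLp.prod_edist_eq_of_L1, l1, ENNReal.ofReal_add (abs_nonneg _) (abs_nonneg _)]
  simp [edist_dist, Real.dist_eq]

theorem l1VarOn_congr {γ γ' : ℝ → ℝ × ℝ} {s : Set ℝ} (h : EqOn γ γ' s) :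
    l1VarOn γ s = l1VarOn γ' s :=
  eVariationOn.congr fun t ht ↦ by simp only [h ht]

theorem ofReal_l1_sub_le_l1VarOn (γ : ℝ → ℝ × ℝ) {a b : ℝ} (hab : a ≤ b) :
    ENNReal.ofReal (l1 (γ a - γ b)) ≤ l1VarOn γ (Icc a b) := by
  rw [← edist_equiv_symm_eq_ofReal_l1]
  exact eVariationOn.edist_le (fun t ↦ (WithLp.equiv 1 (ℝ × ℝ)).symm (γ t))
    (left_mem_Icc.2 hab) (right_mem_Icc.2 hab)

theorem l1VarOn_Icc_add_Icc (γ : ℝ → ℝ × ℝ) {a b c : ℝ} (hab : a ≤ b) (hbc : b ≤ c) :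
    l1VarOn γ (Icc a b) + l1VarOn γ (Icc b c) = l1VarOn γ (Icc a c) := by
  simpa only [univ_inter, l1VarOn] using
    eVariationOn.Icc_add_Icc (fun t ↦ (WithLp.equiv 1 (ℝ × ℝ)).symm (γ t)) hab hbc (mem_univ b)

theorem pathLen_lineMap_le (u v : ℝ × ℝ) :
    pathLen (lineMap u v) ≤ ENNReal.ofReal (l1 (u - v)) := by
  set f : ℝ → WithLp 1 (ℝ × ℝ) :=
    ⇑(lineMap (k := ℝ) ((WithLp.equiv 1 (ℝ × ℝ)).symm u) ((WithLp.equiv 1 (ℝ × ℝ)).symm v))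
  have hf : LipschitzOnWith _ f univ := (lipschitzWith_lineMap _ _).lipschitzOnWith
  have hid : eVariationOn (id : ℝ → ℝ) (Icc 0 1) = 1 := by
    simp
  calc pathLen (lineMap u v) = eVariationOn (f ∘ id) (Icc 0 1) := rfl
    _ ≤ edist ((WithLp.equiv 1 (ℝ × ℝ)).symm u) ((WithLp.equiv 1 (ℝ × ℝ)).symm v) *
        eVariationOn (id : ℝ → ℝ) (Icc 0 1) := by
      simpa only [edist_nndist] using hf.comp_eVariationOn_le (mapsTo_univ _ _)
    _ = ENNReal.ofReal (l1 (u - v)) := by rw [hid, mul_one, edist_equiv_symm_eq_ofReal_l1]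

theorem mapsTo_lineMap_Icc_uIcc (a b : ℝ) : MapsTo (lineMap a b : ℝ → ℝ) (Icc 0 1) (uIcc a b) := by
  rw [← segment_eq_uIcc, segment_eq_image_lineMap]
  exact mapsTo_image _ _

theorem pathLen_comp_lineMap_le (γ : ℝ → ℝ × ℝ) (a b : ℝ) :
    pathLen (γ ∘ lineMap a b) ≤ l1VarOn γ (uIcc a b) := by
  rcases le_total a b with hab | hba
  · exact eVariationOn.comp_le_of_monotoneOn (fun t ↦ (WithLp.equiv 1 (ℝ × ℝ)).symm (γ t)) _
      (AffineMap.lineMap_mono hab |>.monotoneOn _) (mapsTo_lineMap_Icc_uIcc a b)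
  · exact eVariationOn.comp_le_of_antitoneOn (fun t ↦ (WithLp.equiv 1 (ℝ × ℝ)).symm (γ t)) _
      (AffineMap.lineMap_anti hba |>.antitoneOn _) (mapsTo_lineMap_Icc_uIcc a b)

/-- The intrinsic `ℓ₁`-distance of `S`: the infimum of the `ℓ₁`-lengths of the paths in `S` from
`u` to `v`, which is `∞` if there is no such path. -/
def pathEDist (S : Set (ℝ × ℝ)) (u v : ℝ × ℝ) : ℝ≥0∞ :=
  ⨅ γ : {γ // IsPathIn S u v γ}, pathLen γ

theorem IsPathIn.pathEDist_le {γ : ℝ → ℝ × ℝ} (h : IsPathIn S u v γ) :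
    pathEDist S u v ≤ pathLen γ :=
  iInf_le (fun γ : {γ // IsPathIn S u v γ} ↦ pathLen γ) ⟨γ, h⟩

theorem IsShortestPathIn.pathLen_le_pathEDist {γ : ℝ → ℝ × ℝ} (h : IsShortestPathIn S u v γ) :
    pathLen γ ≤ pathEDist S u v :=
  le_iInf fun γ' ↦ h.2 γ' γ'.2

theorem pathEDist_le_l1VarOn {γ : ℝ → ℝ × ℝ} {a b : ℝ} (hc : ContinuousOn γ (uIcc a b))
    (hS : MapsTo γ (uIcc a b) S) : pathEDist S (γ a) (γ b) ≤ l1VarOn γ (uIcc a b) := by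
  have hpath : IsPathIn S (γ a) (γ b) (γ ∘ lineMap a b) :=
    ⟨hc.comp (by fun_prop) (mapsTo_lineMap_Icc_uIcc a b), by simp, by simp,
      hS.comp (mapsTo_lineMap_Icc_uIcc a b)⟩
  exact hpath.pathEDist_le.trans (pathLen_comp_lineMap_le γ a b)

theorem pathEDist_comm (S : Set (ℝ × ℝ)) (u v : ℝ × ℝ) : pathEDist S u v = pathEDist S v u := by
  suffices key : ∀ u v, pathEDist S v u ≤ pathEDist S u v from le_antisymm (key v u) (key u v)
  refine fun u v ↦ le_iInf fun ⟨γ, hc, h0, h1, hS⟩ ↦ ?_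
  have h01 : uIcc (1 : ℝ) 0 = Icc 0 1 := uIcc_of_ge zero_le_one
  rw [← h01] at hc hS
  simpa only [pathLen, h0, h1, h01] using pathEDist_le_l1VarOn hc hS

theorem IsPathIn.pathEDist_le_pathLen_add_pathLen {γ γ' : ℝ → ℝ × ℝ} (h : IsPathIn S u v γ)
    (h' : IsPathIn S v w γ') : pathEDist S u w ≤ pathLen γ + pathLen γ' := by
  obtain ⟨hc, rfl, h1, hS⟩ := h
  obtain ⟨hc', h0', rfl, hS'⟩ := h'
  set δ : ℝ → ℝ × ℝ := fun t ↦ if t ≤ 1 then γ t else γ' (t - 1) with hδ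
  have hmaps : MapsTo (fun t : ℝ ↦ t - 1) (Icc 1 2) (Icc 0 1) := fun t ht ↦
    ⟨by linarith [ht.1], by linarith [ht.2]⟩
  have hγ : EqOn δ γ (Icc 0 1) := fun t ht ↦ if_pos ht.2
  have hγ' : EqOn δ (γ' ∘ fun t ↦ t - 1) (Icc 1 2) := fun t ht ↦ by
    rcases ht.1.eq_or_lt with rfl | h
    · simp [hδ, h1, h0']
    · exact if_neg h.not_ge
  have hunion : Icc (0 : ℝ) 1 ∪ Icc 1 2 = uIcc 0 2 := by
    rw [Icc_union_Icc_eq_Icc zero_le_one one_le_two, uIcc_of_le zero_le_two]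
  have hcδ : ContinuousOn δ (uIcc 0 2) := by
    rw [← hunion]
    exact (hc.congr hγ).union_of_isClosed ((hc'.comp (by fun_prop) hmaps).congr hγ') isClosed_Icc
      isClosed_Icc
  have hSδ : MapsTo δ (uIcc 0 2) S := by
    rw [← hunion]
    exact .union (MapsTo.congr hS hγ.symm) ((MapsTo.comp hS' hmaps).congr hγ'.symm)
  have hlen : l1VarOn δ (Icc 1 2) ≤ pathLen γ' :=
    (l1VarOn_congr hγ').trans_le <|
      eVariationOn.comp_le_of_monotoneOn (fun t ↦ (WithLp.equiv 1 (ℝ × ℝ)).symm (γ' t)) _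
        (fun s _ t _ hst ↦ sub_le_sub_right hst 1) hmaps
  calc pathEDist S (γ 0) (γ' 1) = pathEDist S (δ 0) (δ 2) := by
        rw [hγ (by simp), hγ' (by simp)]; norm_num
    _ ≤ l1VarOn δ (uIcc 0 2) := pathEDist_le_l1VarOn hcδ hSδ
    _ = l1VarOn δ (Icc 0 1) + l1VarOn δ (Icc 1 2) := by
        rw [l1VarOn_Icc_add_Icc δ zero_le_one one_le_two, uIcc_of_le zero_le_two]
    _ ≤ pathLen γ + pathLen γ' := add_le_add (l1VarOn_congr hγ).le hlen

theorem pathEDist_triangle (S : Set (ℝ × ℝ)) (u v w : ℝ × ℝ) :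
    pathEDist S u w ≤ pathEDist S u v + pathEDist S v w := by
  rw [pathEDist.eq_1 S u v, ENNReal.iInf_add]
  refine le_iInf fun γ ↦ ?_
  rw [pathEDist.eq_1 S v w, ENNReal.add_iInf]
  exact le_iInf fun γ' ↦ γ.2.pathEDist_le_pathLen_add_pathLen γ'.2

/-- `S` contains paths from `u` to `v` that are no longer, up to an arbitrarily small error, than
the `ℓ₁`-distance of `u` and `v` in the plane. -/
def L1Joined (S : Set (ℝ × ℝ)) (u v : ℝ × ℝ) : Prop :=
  pathEDist S u v ≤ ENNReal.ofReal (l1 (u - v))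

namespace L1Joined

theorem of_uIcc_subset (h : uIcc u v ⊆ S) : L1Joined S u v := by
  have hseg : segment ℝ u v ⊆ uIcc u v := by
    simpa only [uIcc_prod_eq, segment_eq_uIcc] using Prod.segment_subset (𝕜 := ℝ) u v
  have hmaps : MapsTo (lineMap u v : ℝ → ℝ × ℝ) (Icc 0 1) S := fun t ht ↦
    h <| hseg <| segment_eq_image_lineMap ℝ u v ▸ mem_image_of_mem _ ht
  have hpath : IsPathIn S u v (lineMap u v) := ⟨by fun_prop, by simp, by simp, hmaps⟩
  exact hpath.pathEDist_le.trans (pathLen_lineMap_le u v)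

theorem symm (h : L1Joined S u v) : L1Joined S v u := by
  rwa [L1Joined, pathEDist_comm, l1_sub_comm]

theorem pathEDist_le_add (h : L1Joined S u v) (h' : L1Joined S v w) :
    pathEDist S u w ≤ ENNReal.ofReal (l1 (u - v) + l1 (v - w)) :=
  (pathEDist_triangle S u v w).trans <|
    (add_le_add h h').trans (ENNReal.ofReal_add (l1_nonneg _) (l1_nonneg _)).ge

theorem trans (h : L1Joined S u v) (h' : L1Joined S v w) (hv : v ∈ uIcc u w) :
    L1Joined S u w :=
  (h.pathEDist_le_add h').trans_eq (by rw [l1_sub_add_l1_sub_of_mem_uIcc hv])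

end L1Joined

end PathDistance

/-! ### Local structure of the free space -/

section LocalStructure

variable {F : Set (ℝ × ℝ)} {u v : ℝ × ℝ}

/-- Every point outside `F` lies in an open axis-aligned square of side greater than `1` disjoint
from `F`. The squares are the balls of the sup metric of `ℝ × ℝ`. -/
def HasUnitSquareObstacles (F : Set (ℝ × ℝ)) : Prop :=
  ∀ z ∉ F, ∃ (c : ℝ × ℝ) (r : ℝ), 1 / 2 < r ∧ z ∈ Metric.ball c r ∧ Disjoint (Metric.ball c r) F

theorem left_mem_ball_or_right_mem_ball_of_mem_uIcc {a b c r t : ℝ} (ht : t ∈ uIcc a b)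
    (htc : t ∈ Metric.ball c r) (hab : |a - b| < 2 * r) :
    a ∈ Metric.ball c r ∨ b ∈ Metric.ball c r := by
  wlog h : a ≤ b generalizing a b
  · exact (this (uIcc_comm a b ▸ ht) (abs_sub_comm a b ▸ hab) (le_of_not_ge h)).symm
  rw [Real.ball_eq_Ioo] at *
  rw [uIcc_of_le h] at ht
  by_contra! hn
  have ha : a ≤ c - r := le_of_not_gt fun ha ↦ hn.1 ⟨ha, ht.1.trans_lt htc.2⟩
  have hb : c + r ≤ b := le_of_not_gt fun hb ↦ hn.2 ⟨htc.1.trans_le ht.2, hb⟩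
  rw [abs_sub_comm, abs_of_nonneg (sub_nonneg.2 h)] at hab
  linarith

namespace HasUnitSquareObstacles

protected theorem isClosed (h : HasUnitSquareObstacles F) : IsClosed F := by
  refine isOpen_compl_iff.1 (isOpen_iff_mem_nhds.2 fun z hz ↦ ?_)
  obtain ⟨c, r, -, hzc, hcF⟩ := h z hz
  exact Filter.mem_of_superset (Metric.isOpen_ball.mem_nhds hzc) hcF.subset_compl_right

theorem uIcc_subset_of_fst_eq (h : HasUnitSquareObstacles F) (hu : u ∈ F) (hv : v ∈ F)
    (h₁ : u.1 = v.1) (h₂ : |u.2 - v.2| ≤ 1) : uIcc u v ⊆ F := by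
  intro z hz
  by_contra hzF
  obtain ⟨c, r, hr, hzc, hcF⟩ := h z hzF
  rw [uIcc_prod_eq, ← h₁, uIcc_self] at hz
  rw [← ball_prod_same] at hzc hcF
  have hz₁ : z.1 = u.1 := hz.1
  rcases left_mem_ball_or_right_mem_ball_of_mem_uIcc hz.2 hzc.2 (by linarith) with hb | hb
  · exact disjoint_right.1 hcF hu ⟨hz₁ ▸ hzc.1, hb⟩
  · exact disjoint_right.1 hcF hv ⟨h₁ ▸ hz₁ ▸ hzc.1, hb⟩

theorem uIcc_subset_of_snd_eq (h : HasUnitSquareObstacles F) (hu : u ∈ F) (hv : v ∈ F)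
    (h₁ : |u.1 - v.1| ≤ 1) (h₂ : u.2 = v.2) : uIcc u v ⊆ F := by
  intro z hz
  by_contra hzF
  obtain ⟨c, r, hr, hzc, hcF⟩ := h z hzF
  rw [uIcc_prod_eq, ← h₂, uIcc_self] at hz
  rw [← ball_prod_same] at hzc hcF
  have hz₂ : z.2 = u.2 := hz.2
  rcases left_mem_ball_or_right_mem_ball_of_mem_uIcc hz.1 hzc.1 (by linarith) with hb | hb
  · exact disjoint_right.1 hcF hu ⟨hb, hz₂ ▸ hzc.2⟩
  · exact disjoint_right.1 hcF hv ⟨hb, h₂ ▸ hz₂ ▸ hzc.2⟩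

theorem corner_mem {k : ℝ × ℝ} (h : HasUnitSquareObstacles F) (hk : k ∈ F) (hu : u ∈ F)
    (hv : v ∈ F) (h₁ : |k.1 - u.1| ≤ 1) (h₂ : |k.2 - v.2| ≤ 1) (hv₁ : v.1 ∈ uIcc k.1 u.1)
    (hu₂ : u.2 ∈ uIcc k.2 v.2) : (v.1, u.2) ∈ F := by
  by_contra hF
  obtain ⟨c, r, hr, hzc, hcF⟩ := h _ hF
  rw [← ball_prod_same] at hzc hcF
  rcases left_mem_ball_or_right_mem_ball_of_mem_uIcc hv₁ hzc.1 (by linarith) with hk₁ | hu₁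
  · rcases left_mem_ball_or_right_mem_ball_of_mem_uIcc hu₂ hzc.2 (by linarith) with hk₂ | hv₂
    · exact disjoint_right.1 hcF hk ⟨hk₁, hk₂⟩
    · exact disjoint_right.1 hcF hv ⟨hzc.1, hv₂⟩
  · exact disjoint_right.1 hcF hu ⟨hu₁, hzc.2⟩

end HasUnitSquareObstacles

/-- Near each of its points `z`, the set `F` is a union of axis-aligned rectangles with corner `z`.
Note that `uIcc z w` is the axis-aligned rectangle with opposite corners `z` and `w`. -/
def LocallyBoxConvex (F : Set (ℝ × ℝ)) : Prop :=
  ∀ z ∈ F, ∀ᶠ w in 𝓝[F] z, uIcc z w ⊆ F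

theorem LocallyBoxConvex.isClosed_setOf_l1Joined (hF : LocallyBoxConvex F) (hc : IsClosed F)
    (q : ℝ × ℝ) : IsClosed {z ∈ F | L1Joined F q z} := by
  refine isClosed_of_closure_subset fun z hz ↦ ?_
  have hzF : z ∈ F := closure_minimal (fun w hw ↦ hw.1) hc hz
  have : (𝓝[{z ∈ F | L1Joined F q z}] z).NeBot := mem_closure_iff_nhdsWithin_neBot.1 hz
  refine ⟨hzF, ?_⟩
  have hlim : Filter.Tendsto (fun w ↦ ENNReal.ofReal (l1 (q - w) + l1 (w - z)))
      (𝓝[{z ∈ F | L1Joined F q z}] z) (𝓝 (ENNReal.ofReal (l1 (q - z)))) := by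
    have hcont : Continuous fun w ↦ ENNReal.ofReal (l1 (q - w) + l1 (w - z)) := by
      unfold l1
      exact ENNReal.continuous_ofReal.comp (by fun_prop)
    simpa [l1] using (hcont.tendsto z).mono_left nhdsWithin_le_nhds
  refine ge_of_tendsto hlim ?_
  filter_upwards [self_mem_nhdsWithin,
    (hF z hzF).filter_mono (nhdsWithin_mono z fun w hw ↦ hw.1)] with w hw hzw
  exact hw.2.pathEDist_le_add (L1Joined.of_uIcc_subset hzw).symm

end LocalStructure

/-! ### Axis symmetries -/

section Symmetry

variable {F S : Set (ℝ × ℝ)} {u v : ℝ × ℝ} {σ : ℝ × ℝ → ℝ × ℝ}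

/-- `σ` is an involution of the plane preserving axis-aligned rectangles and distances. It serves to
deduce the statements about one side of a rectangle from those about the opposite side. -/
structure IsAxisSymmetry (σ : ℝ × ℝ → ℝ × ℝ) : Prop where
  involutive : Function.Involutive σ
  isometry : Isometry σ
  l1_sub : ∀ u v, l1 (σ u - σ v) = l1 (u - v)
  mapsTo_uIcc : ∀ u v, MapsTo σ (uIcc u v) (uIcc (σ u) (σ v))

theorem isAxisSymmetry_neg_fst : IsAxisSymmetry (Prod.map Neg.neg id) where
  involutive _ := Prod.ext (neg_neg _) rfl
  isometry := (IsometryEquiv.neg ℝ).isometry.prodMap isometry_id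
  l1_sub u v := by simp [l1, neg_add_eq_sub, abs_sub_comm]
  mapsTo_uIcc u v z hz := by
    rw [uIcc_prod_eq] at hz ⊢
    exact ⟨neg_uIcc u.1 v.1 ▸ neg_mem_neg.2 hz.1, hz.2⟩

theorem isAxisSymmetry_neg_snd : IsAxisSymmetry (Prod.map id Neg.neg) where
  involutive _ := Prod.ext rfl (neg_neg _)
  isometry := isometry_id.prodMap (IsometryEquiv.neg ℝ).isometry
  l1_sub u v := by simp [l1, neg_add_eq_sub, abs_sub_comm]
  mapsTo_uIcc u v z hz := by
    rw [uIcc_prod_eq] at hz ⊢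
    exact ⟨hz.1, neg_uIcc u.2 v.2 ▸ neg_mem_neg.2 hz.2⟩

namespace IsAxisSymmetry

theorem pathEDist_le (hσ : IsAxisSymmetry σ) :
    pathEDist S (σ u) (σ v) ≤ pathEDist (σ ⁻¹' S) u v := by
  have hlen (γ : ℝ → ℝ × ℝ) : pathLen (σ ∘ γ) = pathLen γ := by
    simp only [pathLen, l1VarOn, eVariationOn, edist_equiv_symm_eq_ofReal_l1, Function.comp_apply,
      hσ.l1_sub]
  refine le_iInf fun ⟨γ, hc, h0, h1, hS⟩ ↦ (hlen γ).symm ▸ IsPathIn.pathEDist_le ?_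
  exact ⟨hσ.isometry.continuous.comp_continuousOn hc, congrArg σ h0, congrArg σ h1, hS⟩

theorem l1Joined (hσ : IsAxisSymmetry σ) (h : L1Joined (σ ⁻¹' S) u v) :
    L1Joined S (σ u) (σ v) :=
  hσ.pathEDist_le.trans (h.trans_eq (by rw [hσ.l1_sub]))

theorem locallyBoxConvex_preimage (hσ : IsAxisSymmetry σ) (hF : LocallyBoxConvex F) :
    LocallyBoxConvex (σ ⁻¹' F) := by
  intro z hz
  have htendsto : Filter.Tendsto σ (𝓝[σ ⁻¹' F] z) (𝓝[F] (σ z)) :=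
    hσ.isometry.continuous.continuousWithinAt.tendsto_nhdsWithin (mapsTo_preimage σ F)
  filter_upwards [htendsto.eventually (hF _ hz)] with w hw
  exact fun v hv ↦ hw (hσ.mapsTo_uIcc z w hv)

theorem hasUnitSquareObstacles_preimage (hσ : IsAxisSymmetry σ) (hF : HasUnitSquareObstacles F) :
    HasUnitSquareObstacles (σ ⁻¹' F) := by
  intro z hz
  obtain ⟨c, r, hr, hzc, hcF⟩ := hF _ hz
  have hball : σ ⁻¹' Metric.ball c r = Metric.ball (σ c) r := by
    rw [← hσ.isometry.preimage_ball, ← preimage_comp, hσ.involutive.comp_self, preimage_id]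
  exact ⟨σ c, r, hr, hball ▸ hzc, hball ▸ hcF.preimage σ⟩

theorem isPreconnected_preimage (hσ : IsAxisSymmetry σ) (hS : IsPreconnected S) :
    IsPreconnected (σ ⁻¹' S) := by
  rw [← image_eq_preimage_of_inverse hσ.involutive.leftInverse hσ.involutive.rightInverse]
  exact hS.image σ hσ.isometry.continuous.continuousOn

end IsAxisSymmetry

end Symmetry

/-! ### Paths above a walled rectangle -/

theorem subset_of_isPreconnected_of_eventually_mem {X : Type*} [TopologicalSpace X] {G U : Set X}
    (hG : IsPreconnected G) (hU : IsClosed U) (hGU : ∀ w ∈ G ∩ U, ∀ᶠ w' in 𝓝[G] w, w' ∈ U)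
    (hne : (G ∩ U).Nonempty) : G ⊆ U := by
  have : PreconnectedSpace G := isPreconnected_iff_preconnectedSpace.1 hG
  have hclopen : IsClopen ((↑) ⁻¹' U : Set G) :=
    ⟨hU.preimage continuous_subtype_val, isOpen_iff_mem_nhds.2 fun w hw ↦
      preimage_coe_mem_nhds_subtype.2 (hGU w ⟨w.2, hw⟩)⟩
  obtain ⟨w, hwG, hwU⟩ := hne
  simpa using preimage_eq_univ_iff.1 (hclopen.eq_univ ⟨⟨w, hwG⟩, hwU⟩)

section WalledRect

variable {F G : Set (ℝ × ℝ)} {xlo xhi ylo yhi x : ℝ} {p q : ℝ × ℝ}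

theorem exists_l1Joined_forall_eq_of_uIcc_subset (hc : IsClosed F) (hF : LocallyBoxConvex F)
    {a : ℝ × ℝ} (hq : q ∈ F) (haq : a ≤ q) :
    ∃ z ∈ Icc a q, z ∈ F ∧ L1Joined F q z ∧ ∀ w ∈ Icc a z, uIcc z w ⊆ F → w = z := by
  have hM : IsCompact ({z ∈ F | L1Joined F q z} ∩ Icc a q) :=
    isCompact_Icc.inter_left (hF.isClosed_setOf_l1Joined hc q)
  have hqM : q ∈ {z ∈ F | L1Joined F q z} ∩ Icc a q :=
    ⟨⟨hq, .of_uIcc_subset (by simpa using hq)⟩, haq, le_rfl⟩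
  obtain ⟨z, ⟨⟨hzF, hqz⟩, hz⟩, hmin⟩ :=
    hM.exists_isMinOn (f := fun z ↦ z.1 + z.2) ⟨q, hqM⟩ (by fun_prop)
  refine ⟨z, hz, hzF, hqz, fun w hw hzw ↦ ?_⟩
  have hqw : L1Joined F q w :=
    hqz.trans (.of_uIcc_subset hzw) (uIcc_of_ge (hw.2.trans hz.2) ▸ ⟨hw.2, hz.2⟩)
  have hsum : z.1 + z.2 ≤ w.1 + w.2 := hmin ⟨⟨hzw right_mem_uIcc, hqw⟩, hw.1, hw.2.trans hz.2⟩
  exact Prod.ext (by linarith [hw.2.1, hw.2.2]) (by linarith [hw.2.1, hw.2.2])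

/-- The rectangle `[xlo, xhi] × [ylo, yhi]` lies in `F`, and its two vertical sides are walls: at
heights strictly between `ylo` and `yhi`, no point of `F` outside the rectangle is within
horizontal distance `1` of it. -/
structure IsWalledRect (F : Set (ℝ × ℝ)) (xlo xhi ylo yhi : ℝ) : Prop where
  fst_le : xlo ≤ xhi
  snd_lt : ylo < yhi
  subset : Icc xlo xhi ×ˢ Icc ylo yhi ⊆ F
  walls : ∀ z ∈ F, z.1 ∈ Icc (xlo - 1) (xhi + 1) → z.2 ∈ Ioo ylo yhi → z.1 ∈ Icc xlo xhi

theorem IsWalledRect.le_of_le_of_uIcc_subset {v w z : ℝ × ℝ} (h : IsWalledRect F xlo xhi ylo yhi)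
    (hF : HasUnitSquareObstacles F) (hzF : z ∈ F) (hz : z ∈ Ioc xhi (xhi + 1) ×ˢ Icc yhi (yhi + 1))
    (hrow : ∀ x ∈ Ico xhi z.1, (x, z.2) ∉ F) (hcol : ∀ y ∈ Ico yhi z.2, (z.1, y) ∉ F)
    (hzw : z ≤ w) (hwv : uIcc w v ⊆ F) (hv : v ∈ Ioc xhi (xhi + 1) ×ˢ Ioc ylo (yhi + 1)) :
    z ≤ v := by
  obtain ⟨⟨hz₁, hz₁'⟩, hz₂, hz₂'⟩ := hz
  obtain ⟨⟨hv₁, hv₁'⟩, hv₂, hv₂'⟩ := hv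
  have hkF : (xhi, yhi) ∈ F := h.subset ⟨right_mem_Icc.2 h.fst_le, right_mem_Icc.2 h.snd_lt.le⟩
  have hvF : v ∈ F := hwv right_mem_uIcc
  have hwall : yhi ≤ v.2 := le_of_not_gt fun hvy ↦
    hv₁.not_ge (h.walls v hvF ⟨by linarith [h.fst_le], hv₁'⟩ ⟨hv₂, hvy⟩).2
  have hzk₁ : |xhi - z.1| ≤ 1 := abs_sub_le_iff.2 ⟨by linarith, by linarith⟩
  have hzk₂ : |yhi - z.2| ≤ 1 := abs_sub_le_iff.2 ⟨by linarith, by linarith⟩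
  have hvk₁ : |xhi - v.1| ≤ 1 := abs_sub_le_iff.2 ⟨by linarith, by linarith⟩
  have hvk₂ : |yhi - v.2| ≤ 1 := abs_sub_le_iff.2 ⟨by linarith, by linarith⟩
  -- If `v` were to the left of `z` or below it, the row or the column of `z` would contain a point
  -- of `F`: a point of the box from `w` to `v`, or the fourth corner of `(xhi, yhi)`, `z` and `v`.
  refine ⟨le_of_not_gt fun hvz₁ ↦ hrow v.1 ⟨hv₁.le, hvz₁⟩ ?_,
    le_of_not_gt fun hvz₂ ↦ hcol v.2 ⟨hwall, hvz₂⟩ ?_⟩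
  · rcases le_total z.2 v.2 with hzv | hvz
    · exact hF.corner_mem hkF hzF hvF hzk₁ hvk₂ (mem_uIcc_of_le hv₁.le hvz₁.le)
        (mem_uIcc_of_le hz₂ hzv)
    · refine hwv ?_
      rw [uIcc_prod_eq]
      exact ⟨right_mem_uIcc, mem_uIcc_of_ge hvz hzw.2⟩
  · rcases le_total z.1 v.1 with hzv | hvz
    · exact hF.corner_mem hkF hvF hzF hvk₁ hzk₂ (mem_uIcc_of_le hz₁.le hzv)
        (mem_uIcc_of_le hwall hvz₂.le)
    · refine hwv ?_
      rw [uIcc_prod_eq]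
      exact ⟨mem_uIcc_of_ge hvz hzw.1, right_mem_uIcc⟩

/-- `G` is a connected part of `F` inside the buffer region of the walled rectangle
`[xlo, xhi] × [ylo, yhi]` that meets this rectangle. The giant component of a corridor is the
largest such set. -/
structure IsGiantPart (F G : Set (ℝ × ℝ)) (xlo xhi ylo yhi : ℝ) : Prop
    extends IsWalledRect F xlo xhi ylo yhi where
  isPreconnected : IsPreconnected G
  subset_free : G ⊆ F
  subset_buffer : G ⊆ Icc (xlo - 1) (xhi + 1) ×ˢ Icc (ylo - 1) (yhi + 1)
  inter_nonempty : (G ∩ Icc xlo xhi ×ˢ Icc ylo yhi).Nonempty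

namespace IsGiantPart

theorem neg_fst (h : IsGiantPart F G xlo xhi ylo yhi) :
    IsGiantPart (Prod.map Neg.neg id ⁻¹' F) (Prod.map Neg.neg id ⁻¹' G) (-xhi) (-xlo) ylo yhi where
  fst_le := neg_le_neg h.fst_le
  snd_lt := h.snd_lt
  subset z hz := h.subset ⟨neg_mem_Icc_iff.2 hz.1, hz.2⟩
  walls z hz hz₁ hz₂ := by
    have hz₁' : -z.1 ∈ Icc (xlo - 1) (xhi + 1) :=
      neg_mem_Icc_iff.2 (by simpa only [neg_sub', neg_add', sub_neg_eq_add] using hz₁)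
    exact neg_mem_Icc_iff.1 (h.walls _ hz hz₁' hz₂)
  isPreconnected := isAxisSymmetry_neg_fst.isPreconnected_preimage h.isPreconnected
  subset_free := preimage_mono h.subset_free
  subset_buffer z hz := by
    obtain ⟨⟨h₁, h₂⟩, h₃⟩ := h.subset_buffer hz
    simp only [Prod.map_fst] at h₁ h₂
    exact ⟨⟨by linarith, by linarith⟩, h₃⟩
  inter_nonempty := by
    obtain ⟨z, hzG, hz₁, hz₂⟩ := h.inter_nonempty
    exact ⟨(-z.1, z.2), by simpa using hzG, neg_mem_Icc_iff.2 (by simpa using hz₁), hz₂⟩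

theorem neg_snd (h : IsGiantPart F G xlo xhi ylo yhi) :
    IsGiantPart (Prod.map id Neg.neg ⁻¹' F) (Prod.map id Neg.neg ⁻¹' G) xlo xhi (-yhi) (-ylo) where
  fst_le := h.fst_le
  snd_lt := neg_lt_neg h.snd_lt
  subset z hz := h.subset ⟨hz.1, neg_mem_Icc_iff.2 hz.2⟩
  walls z hz hz₁ hz₂ := h.walls (Prod.map id Neg.neg z) hz hz₁ (neg_mem_Ioo_iff.2 hz₂)
  isPreconnected := isAxisSymmetry_neg_snd.isPreconnected_preimage h.isPreconnected
  subset_free := preimage_mono h.subset_free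
  subset_buffer z hz := by
    obtain ⟨h₁, h₂, h₃⟩ := h.subset_buffer hz
    simp only [Prod.map_snd] at h₂ h₃
    exact ⟨h₁, by linarith, by linarith⟩
  inter_nonempty := by
    obtain ⟨z, hzG, hz₁, hz₂⟩ := h.inter_nonempty
    exact ⟨(z.1, -z.2), by simpa using hzG, hz₁, neg_mem_Icc_iff.2 (by simpa using hz₂)⟩

theorem subset_Ici (h : IsGiantPart F G xlo xhi ylo yhi) (hF : HasUnitSquareObstacles F)
    (hF' : LocallyBoxConvex F) {z : ℝ × ℝ} (hzF : z ∈ F) (hz₁ : xhi < z.1) (hz₂ : yhi ≤ z.2)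
    (hrow : ∀ x ∈ Ico xhi z.1, (x, z.2) ∉ F) (hcol : ∀ y ∈ Ico yhi z.2, (z.1, y) ∉ F)
    (hne : (G ∩ Ici z).Nonempty) : G ⊆ Ici z := by
  refine subset_of_isPreconnected_of_eventually_mem h.isPreconnected isClosed_Ici
    (fun w ⟨hwG, hzw⟩ ↦ ?_) hne
  obtain ⟨⟨-, hw₁⟩, -, hw₂⟩ := h.subset_buffer hwG
  have hnear : ∀ᶠ v in 𝓝[G] w, v ∈ Ioi xhi ×ˢ Ioi ylo :=
    nhdsWithin_le_nhds (prod_mem_nhds (Ioi_mem_nhds (hz₁.trans_le hzw.1))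
      (Ioi_mem_nhds (h.snd_lt.trans_le (hz₂.trans hzw.2))))
  filter_upwards [hnear, self_mem_nhdsWithin,
    (hF' w (h.subset_free hwG)).filter_mono (nhdsWithin_mono w h.subset_free)] with v hv hvG hwv
  obtain ⟨⟨-, hv₁⟩, -, hv₂⟩ := h.subset_buffer hvG
  exact h.le_of_le_of_uIcc_subset hF hzF ⟨⟨hz₁, hzw.1.trans hw₁⟩, hz₂, hzw.2.trans hw₂⟩ hrow hcol
    hzw hwv ⟨⟨hv.1, hv₁⟩, hv.2, hv₂⟩

theorem exists_l1Joined_right (h : IsGiantPart F G xlo xhi ylo yhi)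
    (hF : HasUnitSquareObstacles F) (hF' : LocallyBoxConvex F) (hq : q ∈ G) (hqy : yhi ≤ q.2)
    (hx : x ∈ Icc xhi q.1) : ∃ y ∈ Icc yhi q.2, (x, y) ∈ F ∧ L1Joined F q (x, y) := by
  obtain ⟨z, ⟨⟨hxz, hyz⟩, hzq⟩, hzF, hqz, hmin⟩ :=
    exists_l1Joined_forall_eq_of_uIcc_subset hF.isClosed hF' (h.subset_free hq)
      (Prod.mk_le_mk.2 ⟨hx.2, hqy⟩ : (x, yhi) ≤ (q.1, q.2))
  dsimp only at hxz hyz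
  rcases hxz.eq_or_lt with rfl | hxz
  · exact ⟨z.2, ⟨hyz, hzq.2⟩, hzF, hqz⟩
  exfalso
  obtain ⟨⟨-, hq₁⟩, -, hq₂⟩ := h.subset_buffer hq
  have hrow : ∀ x' ∈ Ico xhi z.1, (x', z.2) ∉ F := by
    intro x' hx' hF₁
    have hsub : uIcc z (x', z.2) ⊆ F := hF.uIcc_subset_of_snd_eq hzF hF₁
      (abs_sub_le_iff.2 ⟨by linarith [hzq.1, hx'.1], by linarith [hx'.2]⟩) rfl
    have hlt : max x x' < z.1 := max_lt hxz hx'.2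
    have hmem : (max x x', z.2) ∈ uIcc z (x', z.2) := by
      rw [uIcc_prod_eq]
      exact ⟨mem_uIcc_of_ge (le_max_right _ _) hlt.le, right_mem_uIcc⟩
    exact hlt.ne <| congrArg Prod.fst <|
      hmin (max x x', z.2) ⟨⟨le_max_left _ _, hyz⟩, hlt.le, le_rfl⟩
        ((uIcc_subset_uIcc_left hmem).trans hsub)
  have hcol : ∀ y ∈ Ico yhi z.2, (z.1, y) ∉ F := by
    intro y hy hF₁
    have hsub : uIcc z (z.1, y) ⊆ F := hF.uIcc_subset_of_fst_eq hzF hF₁ rfl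
      (abs_sub_le_iff.2 ⟨by linarith [hzq.2, hy.1], by linarith [hy.2]⟩)
    exact hy.2.ne <| congrArg Prod.snd <| hmin (z.1, y) ⟨⟨hxz.le, hy.1⟩, le_rfl, hy.2.le⟩ hsub
  obtain ⟨r, hrG, hr⟩ := h.inter_nonempty
  have hxr : xhi < r.1 := (hx.1.trans_lt hxz).trans_le
    (h.subset_Ici hF hF' hzF (hx.1.trans_lt hxz) hyz hrow hcol ⟨q, hq, hzq⟩ hrG).1
  exact hxr.not_ge hr.1.2

theorem l1Joined_top_right (h : IsGiantPart F G xlo xhi ylo yhi)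
    (hF : HasUnitSquareObstacles F) (hF' : LocallyBoxConvex F) (hq : q ∈ G) (hqy : yhi ≤ q.2)
    (hqx : xhi ≤ q.1) : L1Joined F q (xhi, yhi) := by
  obtain ⟨y, hy, hyF, hqy'⟩ := h.exists_l1Joined_right hF hF' hq hqy ⟨le_rfl, hqx⟩
  have hkF : (xhi, yhi) ∈ F := h.subset ⟨right_mem_Icc.2 h.fst_le, right_mem_Icc.2 h.snd_lt.le⟩
  have hq₂ := (h.subset_buffer hq).2.2
  have hvert : uIcc (xhi, y) (xhi, yhi) ⊆ F := hF.uIcc_subset_of_fst_eq hyF hkF rfl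
    (abs_sub_le_iff.2 ⟨by linarith [hy.2], by linarith [hy.1]⟩)
  refine hqy'.trans (.of_uIcc_subset hvert) ?_
  rw [uIcc_prod_eq]
  exact ⟨right_mem_uIcc, mem_uIcc_of_ge hy.1 hy.2⟩

theorem l1Joined_top_left (h : IsGiantPart F G xlo xhi ylo yhi)
    (hF : HasUnitSquareObstacles F) (hF' : LocallyBoxConvex F) (hq : q ∈ G) (hqy : yhi ≤ q.2)
    (hqx : q.1 ≤ xlo) : L1Joined F q (xlo, yhi) := by
  have hσ := isAxisSymmetry_neg_fst
  simpa using hσ.l1Joined <| h.neg_fst.l1Joined_top_right (q := (-q.1, q.2))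
    (hσ.hasUnitSquareObstacles_preimage hF) (hσ.locallyBoxConvex_preimage hF')
    (by simpa using hq) hqy (neg_le_neg hqx)

theorem pathEDist_le_of_right (h : IsGiantPart F G xlo xhi ylo yhi)
    (hF : HasUnitSquareObstacles F) (hF' : LocallyBoxConvex F) (hp : p ∈ G) (hq : q ∈ G)
    (hpy : yhi ≤ p.2) (hqy : yhi ≤ q.2) (hp₁ : xhi ≤ p.1) (hpq : p.1 ≤ q.1) :
    pathEDist F p q ≤ ENNReal.ofReal (|p.1 - q.1| + (p.2 - yhi) + (q.2 - yhi)) := by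
  obtain ⟨y, hy, hyF, hqy'⟩ := h.exists_l1Joined_right hF hF' hq hqy ⟨hp₁, hpq⟩
  have hp₂ := (h.subset_buffer hp).2.2
  have hq₂ := (h.subset_buffer hq).2.2
  have hvert : uIcc p (p.1, y) ⊆ F := hF.uIcc_subset_of_fst_eq (h.subset_free hp) hyF rfl
    (abs_sub_le_iff.2 ⟨by linarith [hy.1], by linarith [hy.2]⟩)
  refine ((L1Joined.of_uIcc_subset hvert).pathEDist_le_add hqy'.symm).trans
    (ENNReal.ofReal_le_ofReal ?_)
  have hpy' : |p.2 - y| ≤ p.2 - yhi + (y - yhi) :=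
    abs_sub_le_iff.2 ⟨by linarith [hy.1], by linarith⟩
  have hyq : |y - q.2| = q.2 - y := by rw [abs_of_nonpos (by linarith [hy.2]), neg_sub]
  simp only [l1, Prod.fst_sub, Prod.snd_sub, sub_self, abs_zero, hyq]
  linarith

theorem pathEDist_le_of_left (h : IsGiantPart F G xlo xhi ylo yhi)
    (hF : HasUnitSquareObstacles F) (hF' : LocallyBoxConvex F) (hp : p ∈ G) (hq : q ∈ G)
    (hpy : yhi ≤ p.2) (hqy : yhi ≤ q.2) (hq₁ : q.1 ≤ xlo) (hpq : p.1 ≤ q.1) :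
    pathEDist F p q ≤ ENNReal.ofReal (|p.1 - q.1| + (p.2 - yhi) + (q.2 - yhi)) := by
  have hσ := isAxisSymmetry_neg_fst
  have := hσ.pathEDist_le.trans <| h.neg_fst.pathEDist_le_of_right (p := (-q.1, q.2))
    (q := (-p.1, p.2)) (hσ.hasUnitSquareObstacles_preimage hF) (hσ.locallyBoxConvex_preimage hF')
    (by simpa using hq) (by simpa using hp) hqy hpy (neg_le_neg hq₁) (neg_le_neg hpq)
  rw [pathEDist_comm]
  simpa [neg_add_eq_sub, add_right_comm] using this

theorem l1Joined_top (h : IsGiantPart F G xlo xhi ylo yhi)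
    (hF : HasUnitSquareObstacles F) (hF' : LocallyBoxConvex F) (hq : q ∈ G) (hqy : yhi ≤ q.2) :
    L1Joined F q (max xlo (min xhi q.1), yhi) := by
  rcases le_total xhi q.1 with hxq | hqx
  · rw [min_eq_left hxq, max_eq_right h.fst_le]
    exact h.l1Joined_top_right hF hF' hq hqy hxq
  rw [min_eq_right hqx]
  rcases le_total q.1 xlo with hqx' | hxq
  · rw [max_eq_left hqx']
    exact h.l1Joined_top_left hF hF' hq hqy hqx'
  · rw [max_eq_right hxq]
    refine .of_uIcc_subset <| hF.uIcc_subset_of_fst_eq (h.subset_free hq)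
      (h.subset ⟨⟨hxq, hqx⟩, right_mem_Icc.2 h.snd_lt.le⟩) rfl ?_
    exact abs_sub_le_iff.2 ⟨by linarith [(h.subset_buffer hq).2.2], by linarith⟩

theorem pathEDist_le_of_top (h : IsGiantPart F G xlo xhi ylo yhi)
    (hF : HasUnitSquareObstacles F) (hF' : LocallyBoxConvex F) (hp : p ∈ G) (hq : q ∈ G)
    (hpy : yhi ≤ p.2) (hqy : yhi ≤ q.2) :
    pathEDist F p q ≤ ENNReal.ofReal (|p.1 - q.1| + (p.2 - yhi) + (q.2 - yhi)) := by
  wlog hpq : p.1 ≤ q.1 generalizing p q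
  · rw [pathEDist_comm, abs_sub_comm, add_right_comm]
    exact this hq hp hqy hpy (le_of_not_ge hpq)
  rcases le_total xhi p.1 with hp₁ | hp₁
  · exact h.pathEDist_le_of_right hF hF' hp hq hpy hqy hp₁ hpq
  rcases le_total q.1 xlo with hq₁ | hq₁
  · exact h.pathEDist_le_of_left hF hF' hp hq hpy hqy hq₁ hpq
  have hpa := h.l1Joined_top hF hF' hp hpy
  have hqb := h.l1Joined_top hF hF' hq hqy
  rw [min_eq_right hp₁] at hpa
  rw [max_eq_right (le_min h.fst_le hq₁)] at hqb
  set a := max xlo p.1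
  set b := min xhi q.1
  have hpa₁ : p.1 ≤ a := le_max_right _ _
  have hbq₁ : b ≤ q.1 := min_le_right _ _
  have hab : a ≤ b := max_le (le_min h.fst_le hq₁) (le_min hp₁ hpq)
  have hsub : uIcc (a, yhi) (b, yhi) ⊆ F := by
    rw [uIcc_prod_eq, uIcc_of_le hab, uIcc_self]
    exact (prod_mono (Icc_subset_Icc (le_max_left _ _) (min_le_left _ _))
      (singleton_subset_iff.2 (right_mem_Icc.2 h.snd_lt.le))).trans h.subset
  have haq : L1Joined F (a, yhi) q := by
    refine (L1Joined.of_uIcc_subset hsub).trans hqb.symm ?_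
    rw [uIcc_prod_eq]
    exact ⟨mem_uIcc_of_le hab hbq₁, left_mem_uIcc⟩
  refine (hpa.pathEDist_le_add haq).trans_eq (congrArg ENNReal.ofReal ?_)
  simp only [l1, Prod.fst_sub, Prod.snd_sub]
  rw [abs_of_nonpos (by linarith), abs_of_nonneg (by linarith), abs_of_nonpos (by linarith),
    abs_of_nonpos (by linarith), abs_of_nonpos (by linarith)]
  ring

theorem pathEDist_le_of_bot (h : IsGiantPart F G xlo xhi ylo yhi)
    (hF : HasUnitSquareObstacles F) (hF' : LocallyBoxConvex F) (hp : p ∈ G) (hq : q ∈ G)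
    (hpy : p.2 ≤ ylo) (hqy : q.2 ≤ ylo) :
    pathEDist F p q ≤ ENNReal.ofReal (|p.1 - q.1| + (ylo - p.2) + (ylo - q.2)) := by
  have hσ := isAxisSymmetry_neg_snd
  have := hσ.pathEDist_le.trans <| h.neg_snd.pathEDist_le_of_top (p := (p.1, -p.2))
    (q := (q.1, -q.2)) (hσ.hasUnitSquareObstacles_preimage hF) (hσ.locallyBoxConvex_preimage hF')
    (by simpa using hp) (by simpa using hq) (neg_le_neg hpy) (neg_le_neg hqy)
  simpa [neg_add_eq_sub] using this

theorem pathEDist_le_of_same_side (h : IsGiantPart F G xlo xhi ylo yhi)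
    (hF : HasUnitSquareObstacles F) (hF' : LocallyBoxConvex F) (hp : p ∈ G) (hq : q ∈ G)
    (hpq : (yhi ≤ p.2 ∧ yhi ≤ q.2) ∨ (p.2 ≤ ylo ∧ q.2 ≤ ylo)) :
    pathEDist F p q ≤ ENNReal.ofReal (|p.1 - q.1| + 2 - |p.2 - q.2|) := by
  obtain ⟨-, hp₁, hp₂⟩ := h.subset_buffer hp
  obtain ⟨-, hq₁, hq₂⟩ := h.subset_buffer hq
  rcases hpq with ⟨hpy, hqy⟩ | ⟨hpy, hqy⟩
  · refine (h.pathEDist_le_of_top hF hF' hp hq hpy hqy).trans (ENNReal.ofReal_le_ofReal ?_)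
    have : |p.2 - q.2| ≤ (yhi + 1 - p.2) + (yhi + 1 - q.2) :=
      abs_sub_le_iff.2 ⟨by linarith, by linarith⟩
    linarith
  · refine (h.pathEDist_le_of_bot hF hF' hp hq hpy hqy).trans (ENNReal.ofReal_le_ofReal ?_)
    have : |p.2 - q.2| ≤ (p.2 - (ylo - 1)) + (q.2 - (ylo - 1)) :=
      abs_sub_le_iff.2 ⟨by linarith, by linarith⟩
    linarith

end IsGiantPart

end WalledRect

/-! ### Shortest paths without horizontal excursions -/

theorem exists_eq_ne_of_not_monotoneOn_of_not_antitoneOn {f : ℝ → ℝ} {I : Set ℝ}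
    (hI : I.OrdConnected) (hf : ContinuousOn f I) (hmono : ¬MonotoneOn f I)
    (hanti : ¬AntitoneOn f I) :
    ∃ s ∈ I, ∃ m, ∃ t ∈ I, s ≤ m ∧ m ≤ t ∧ f s = f t ∧ f m ≠ f s := by
  obtain ⟨a, ha, b, hb, c, hc, hab, hbc, h⟩ :=
    not_monotoneOn_not_antitoneOn_iff_exists_lt_lt.1 ⟨hmono, hanti⟩
  obtain ⟨y, hya, hyc, hyb⟩ : ∃ y ∈ uIcc (f a) (f b), y ∈ uIcc (f b) (f c) ∧ f b ≠ y := by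
    rcases h with ⟨hfab, hfcb⟩ | ⟨hfba, hfbc⟩
    · exact ⟨max (f a) (f c), mem_uIcc_of_le (le_max_left _ _) (max_lt hfab hfcb).le,
        mem_uIcc_of_ge (le_max_right _ _) (max_lt hfab hfcb).le, (max_lt hfab hfcb).ne'⟩
    · exact ⟨min (f a) (f c), mem_uIcc_of_ge (lt_min hfba hfbc).le (min_le_left _ _),
        mem_uIcc_of_le (lt_min hfba hfbc).le (min_le_right _ _), (lt_min hfba hfbc).ne⟩
  obtain ⟨s, hs, rfl⟩ := intermediate_value_uIcc (hf.mono (hI.uIcc_subset ha hb)) hya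
  obtain ⟨t, ht, hst⟩ := intermediate_value_uIcc (hf.mono (hI.uIcc_subset hb hc)) hyc
  have hsI := hI.uIcc_subset ha hb hs
  have htI := hI.uIcc_subset hb hc ht
  rw [uIcc_of_le hab.le] at hs
  rw [uIcc_of_le hbc.le] at ht
  exact ⟨s, hsI, b, t, htI, hs.2, ht.1, hst.symm, hyb⟩

section Excursion

variable {F : Set (ℝ × ℝ)} {p q : ℝ × ℝ} {g : ℝ → ℝ × ℝ} {s m t : ℝ}

theorem l1VarOn_add_l1VarOn_add_l1VarOn (g : ℝ → ℝ × ℝ) (hs : 0 ≤ s) (hst : s ≤ t) (ht : t ≤ 1) :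
    l1VarOn g (Icc 0 s) + l1VarOn g (Icc s t) + l1VarOn g (Icc t 1) = pathLen g := by
  rw [l1VarOn_Icc_add_Icc g hs hst, l1VarOn_Icc_add_Icc g (hs.trans hst) ht, pathLen]

theorem IsPathIn.pathEDist_le_l1VarOn (hg : IsPathIn F p q g) (hs : 0 ≤ s) (hst : s ≤ t)
    (ht : t ≤ 1) : pathEDist F (g s) (g t) ≤ l1VarOn g (Icc s t) := by
  have hsub : uIcc s t ⊆ Icc 0 1 := uIcc_of_le hst ▸ Icc_subset_Icc hs ht
  simpa only [uIcc_of_le hst] using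
    _root_.pathEDist_le_l1VarOn (hg.1.mono hsub) fun r hr ↦ hg.2.2.2 r (hsub hr)

theorem IsPathIn.ofReal_l1_add_l1_add_l1_le_pathLen (hg : IsPathIn F p q g) (hs : 0 ≤ s)
    (hst : s ≤ t) (ht : t ≤ 1) :
    ENNReal.ofReal (l1 (p - g s) + l1 (g s - g t) + l1 (g t - q)) ≤ pathLen g := by
  rw [ENNReal.ofReal_add (add_nonneg (l1_nonneg _) (l1_nonneg _)) (l1_nonneg _),
    ENNReal.ofReal_add (l1_nonneg _) (l1_nonneg _), ← l1VarOn_add_l1VarOn_add_l1VarOn g hs hst ht,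
    ← hg.2.1, ← hg.2.2.1]
  gcongr <;> apply ofReal_l1_sub_le_l1VarOn <;> assumption

theorem IsShortestPathIn.l1VarOn_le_pathEDist (hg : IsShortestPathIn F p q g)
    (hfin : pathLen g ≠ ∞) (hs : 0 ≤ s) (hst : s ≤ t) (ht : t ≤ 1) :
    l1VarOn g (Icc s t) ≤ pathEDist F (g s) (g t) := by
  have hsplit := l1VarOn_add_l1VarOn_add_l1VarOn g hs hst ht
  have h₀ : l1VarOn g (Icc 0 s) ≠ ∞ := fun h ↦ hfin (by rw [← hsplit, h, top_add, top_add])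
  have h₁ : l1VarOn g (Icc t 1) ≠ ∞ := fun h ↦ hfin (by rw [← hsplit, h, add_top])
  have hps : pathEDist F p (g s) ≤ l1VarOn g (Icc 0 s) := by
    simpa only [hg.1.2.1] using hg.1.pathEDist_le_l1VarOn le_rfl hs (hst.trans ht)
  have htq : pathEDist F (g t) q ≤ l1VarOn g (Icc t 1) := by
    simpa only [hg.1.2.2.1] using hg.1.pathEDist_le_l1VarOn (hs.trans hst) ht le_rfl
  have hle := calc
    l1VarOn g (Icc 0 s) + l1VarOn g (Icc s t) + l1VarOn g (Icc t 1)
    _ = pathLen g := hsplit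
    _ ≤ pathEDist F p q := hg.pathLen_le_pathEDist
    _ ≤ pathEDist F p (g s) + pathEDist F (g s) (g t) + pathEDist F (g t) q :=
      (pathEDist_triangle F p (g t) q).trans (by gcongr; exact pathEDist_triangle F p (g s) (g t))
    _ ≤ l1VarOn g (Icc 0 s) + pathEDist F (g s) (g t) + l1VarOn g (Icc t 1) := by gcongr
  rwa [ENNReal.add_le_add_iff_right h₁, ENNReal.add_le_add_iff_left h₀] at hle

theorem IsShortestPathIn.not_l1Joined (hg : IsShortestPathIn F p q g) (hfin : pathLen g ≠ ∞)
    (hs : 0 ≤ s) (hsm : s ≤ m) (hmt : m ≤ t) (ht : t ≤ 1) (hst : (g s).1 = (g t).1)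
    (hm : (g m).1 ≠ (g s).1) : ¬L1Joined F (g s) (g t) := by
  intro hjoin
  have hle := calc
    ENNReal.ofReal (l1 (g s - g m) + l1 (g m - g t))
    _ = ENNReal.ofReal (l1 (g s - g m)) + ENNReal.ofReal (l1 (g m - g t)) :=
      ENNReal.ofReal_add (l1_nonneg _) (l1_nonneg _)
    _ ≤ l1VarOn g (Icc s m) + l1VarOn g (Icc m t) :=
      add_le_add (ofReal_l1_sub_le_l1VarOn g hsm) (ofReal_l1_sub_le_l1VarOn g hmt)
    _ = l1VarOn g (Icc s t) := l1VarOn_Icc_add_Icc g hsm hmt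
    _ ≤ pathEDist F (g s) (g t) := hg.l1VarOn_le_pathEDist hfin hs (hsm.trans hmt) ht
    _ ≤ ENNReal.ofReal (l1 (g s - g t)) := hjoin
  rw [ENNReal.ofReal_le_ofReal_iff (l1_nonneg _)] at hle
  simp only [l1, Prod.fst_sub, Prod.snd_sub, ← hst, sub_self, abs_zero] at hle
  have hpos : 0 < |(g m).1 - (g s).1| := abs_pos.2 (sub_ne_zero.2 hm)
  linarith [abs_nonneg ((g s).1 - (g m).1), abs_sub_le (g s).2 (g m).2 (g t).2]

theorem HasUnitSquareObstacles.xMonotone_of_pathEDist_le (hF : HasUnitSquareObstacles F)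
    (hg : IsShortestPathIn F p q g)
    (hle : pathEDist F p q ≤ ENNReal.ofReal (|p.1 - q.1| + 2 - |p.2 - q.2|)) : XMonotone g := by
  by_contra! hmono
  rw [XMonotone, not_or] at hmono
  have hlen := hg.pathLen_le_pathEDist.trans hle
  obtain ⟨s, hs, m, t, ht, hsm, hmt, hst, hm⟩ :=
    exists_eq_ne_of_not_monotoneOn_of_not_antitoneOn ordConnected_Icc
      (continuous_fst.comp_continuousOn hg.1.1) hmono.1 hmono.2
  have hgap : 1 < |(g s).2 - (g t).2| := by
    by_contra! hgap
    exact hg.not_l1Joined (ne_top_of_le_ne_top ENNReal.ofReal_ne_top hlen) hs.1 hsm hmt ht.2 hst hm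
      (.of_uIcc_subset (hF.uIcc_subset_of_fst_eq (hg.1.2.2.2 s hs) (hg.1.2.2.2 t ht) hst hgap))
  have hgap' : |(g s).2 - (g t).2| ≤ l1 (g s - g t) := le_add_of_nonneg_left (abs_nonneg _)
  have hpos : 0 < l1 (p - g s) + l1 (g s - g t) + l1 (g t - q) := by
    linarith [l1_nonneg (p - g s), l1_nonneg (g t - q)]
  have hlt : |p.1 - q.1| + 2 - |p.2 - q.2| < l1 (p - g s) + l1 (g s - g t) + l1 (g t - q) := by
    simp only [l1, Prod.fst_sub, Prod.snd_sub]
    linarith [abs_sub_le p.1 (g s).1 q.1, abs_sub_le (g s).1 (g t).1 q.1,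
      abs_sub_le (g s).2 p.2 (g t).2, abs_sub_le p.2 q.2 (g t).2, abs_sub_comm (g s).2 p.2,
      abs_sub_comm q.2 (g t).2]
  exact ((ENNReal.ofReal_lt_ofReal_iff hpos).2 hlt).not_ge
    ((hg.1.ofReal_l1_add_l1_add_l1_le_pathLen hs.1 (hsm.trans hmt) ht.2).trans hlen)

end Excursion

/-! ### Finite unions of boxes -/

theorem finite_frontier_of_ordConnected {α : Type*} [LinearOrder α] [TopologicalSpace α]
    [OrderTopology α] {I : Set α} (hI : I.OrdConnected) : (frontier I).Finite := by
  have hLUB : {x | IsLUB I x}.Subsingleton := fun x hx y hy ↦ hx.unique hy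
  have hGLB : {x | IsGLB I x}.Subsingleton := fun x hx y hy ↦ hx.unique hy
  refine (hLUB.finite.union hGLB.finite).subset fun x ⟨hxc, hxi⟩ ↦ ?_
  by_cases hub : x ∈ upperBounds I
  · exact .inl (isLUB_of_mem_closure hub hxc)
  by_cases hlb : x ∈ lowerBounds I
  · exact .inr (isGLB_of_mem_closure hlb hxc)
  simp only [mem_upperBounds, mem_lowerBounds] at hub hlb
  push Not at hub hlb
  obtain ⟨j, hj, hxj⟩ := hub
  obtain ⟨i, hi, hix⟩ := hlb
  exact absurd (mem_interior_iff_mem_nhds.2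
    (Filter.mem_of_superset (Icc_mem_nhds hix hxj) (hI.out hi hj))) hxi

section BoxUnion

variable {B B' S T F P : Set (ℝ × ℝ)} {z w : ℝ × ℝ}

/-- A box: a product of two intervals, each of which may be empty, degenerate, unbounded, and open
or closed at either end. -/
def IsBox (B : Set (ℝ × ℝ)) : Prop :=
  ∃ I J : Set ℝ, I.OrdConnected ∧ J.OrdConnected ∧ I ×ˢ J = B

/-- A finite union of boxes. These sets form a Boolean algebra which is stable under Minkowski sums
with boxes, so it contains the free space of any of its members. -/
def IsBoxUnion (S : Set (ℝ × ℝ)) : Prop :=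
  ∃ 𝓑 : Set (Set (ℝ × ℝ)), 𝓑.Finite ∧ (∀ B ∈ 𝓑, IsBox B) ∧ ⋃₀ 𝓑 = S

namespace IsBox

theorem inter (h : IsBox B) (h' : IsBox B') : IsBox (B ∩ B') := by
  obtain ⟨I, J, hI, hJ, rfl⟩ := h
  obtain ⟨I', J', hI', hJ', rfl⟩ := h'
  exact ⟨_, _, hI.inter hI', hJ.inter hJ', prod_inter_prod.symm⟩

open scoped Pointwise in
theorem add (h : IsBox B) (h' : IsBox B') : IsBox (B + B') := by
  obtain ⟨I, J, hI, hJ, rfl⟩ := h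
  obtain ⟨I', J', hI', hJ', rfl⟩ := h'
  exact ⟨_, _, (hI.convex.add hI'.convex).ordConnected, (hJ.convex.add hJ'.convex).ordConnected,
    (prod_add_prod_comm ..).symm⟩

theorem closure (h : IsBox B) : IsBox (closure B) := by
  obtain ⟨I, J, hI, hJ, rfl⟩ := h
  exact ⟨_, _, hI.convex.closure.ordConnected, hJ.convex.closure.ordConnected,
    closure_prod_eq.symm⟩

theorem uIcc_subset (h : IsBox B) (hz : z ∈ B) (hw : w ∈ B) : uIcc z w ⊆ B := by
  obtain ⟨I, J, hI, hJ, rfl⟩ := h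
  rw [uIcc_prod_eq]
  exact prod_mono (hI.uIcc_subset hz.1 hw.1) (hJ.uIcc_subset hz.2 hw.2)

theorem exists_finite_frontier_subset (h : IsBox B) :
    ∃ X Y : Set ℝ, X.Finite ∧ Y.Finite ∧ ∀ z ∈ frontier B, z.1 ∈ X ∨ z.2 ∈ Y := by
  obtain ⟨I, J, hI, hJ, rfl⟩ := h
  refine ⟨frontier I, frontier J, finite_frontier_of_ordConnected hI,
    finite_frontier_of_ordConnected hJ, fun z hz ↦ ?_⟩
  rw [frontier_prod_eq] at hz
  exact hz.symm.imp And.left And.right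

theorem isBoxUnion_compl (h : IsBox B) : IsBoxUnion Bᶜ := by
  obtain ⟨I, J, hI, hJ, rfl⟩ := h
  have hU (K : Set ℝ) : ((upperClosure K : Set ℝ)ᶜ).OrdConnected :=
    (upperClosure K).upper.compl.ordConnected
  have hL (K : Set ℝ) : ((lowerClosure K : Set ℝ)ᶜ).OrdConnected :=
    (lowerClosure K).lower.compl.ordConnected
  refine ⟨{(upperClosure I : Set ℝ)ᶜ ×ˢ univ, (lowerClosure I : Set ℝ)ᶜ ×ˢ univ,
    univ ×ˢ (upperClosure J : Set ℝ)ᶜ, univ ×ˢ (lowerClosure J : Set ℝ)ᶜ}, by simp, ?_, ?_⟩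
  · rintro _ (rfl | rfl | rfl | rfl)
    exacts [⟨_, _, hU I, ordConnected_univ, rfl⟩, ⟨_, _, hL I, ordConnected_univ, rfl⟩,
      ⟨_, _, ordConnected_univ, hU J, rfl⟩, ⟨_, _, ordConnected_univ, hL J, rfl⟩]
  · conv_rhs => rw [← hI.upperClosure_inter_lowerClosure, ← hJ.upperClosure_inter_lowerClosure]
    simp only [compl_prod_eq_union, compl_inter, union_prod, prod_union, union_assoc, sUnion_insert,
      sUnion_singleton]

end IsBox

namespace IsBoxUnion

theorem inter (h : IsBoxUnion S) (h' : IsBoxUnion T) : IsBoxUnion (S ∩ T) := by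
  obtain ⟨𝓑, hfin, hB, rfl⟩ := h
  obtain ⟨𝓑', hfin', hB', rfl⟩ := h'
  refine ⟨image2 (· ∩ ·) 𝓑 𝓑', hfin.image2 _ hfin', ?_, ?_⟩
  · rintro _ ⟨B, hb, B', hb', rfl⟩
    exact (hB B hb).inter (hB' B' hb')
  · rw [sUnion_inter_sUnion, ← image_prod, sUnion_image]

theorem compl (h : IsBoxUnion S) : IsBoxUnion Sᶜ := by
  obtain ⟨𝓑, hfin, hB, rfl⟩ := h
  induction 𝓑, hfin using Set.Finite.induction_on with
  | empty => exact ⟨{univ}, finite_singleton _, by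
      rintro _ rfl; exact ⟨_, _, ordConnected_univ, ordConnected_univ, univ_prod_univ⟩, by simp⟩
  | insert _ _ ih =>
    rw [sUnion_insert, compl_union]
    exact (hB _ (mem_insert _ _)).isBoxUnion_compl.inter
      (ih fun B hb ↦ hB B (mem_insert_of_mem _ hb))

open scoped Pointwise in
theorem add_isBox (h : IsBoxUnion S) (hB : IsBox B) : IsBoxUnion (S + B) := by
  obtain ⟨𝓑, hfin, h𝓑, rfl⟩ := h
  refine ⟨(· + B) '' 𝓑, hfin.image _, forall_mem_image.2 fun A hA ↦ (h𝓑 A hA).add hB, ?_⟩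
  rw [sUnion_image, sUnion_add]

theorem locallyBoxConvex (h : IsBoxUnion S) (hS : IsClosed S) : LocallyBoxConvex S := by
  obtain ⟨𝓑, hfin, hB, rfl⟩ := h
  intro z _
  have hfar : ∀ᶠ w in 𝓝 z, ∀ B ∈ 𝓑, z ∉ closure B → w ∉ B :=
    (Filter.eventually_all_finite hfin).2 fun B _ ↦ by
      by_cases hzB : z ∈ closure B
      · exact .of_forall fun w hz ↦ absurd hzB hz
      · filter_upwards [isClosed_closure.isOpen_compl.mem_nhds hzB] with w hw _
        exact fun hwB ↦ hw (subset_closure hwB)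
  filter_upwards [self_mem_nhdsWithin, nhdsWithin_le_nhds hfar] with w ⟨B, hb, hwB⟩ hw
  have hzB : z ∈ closure B := by_contra fun hzB ↦ hw B hb hzB hwB
  exact ((hB B hb).closure.uIcc_subset hzB (subset_closure hwB)).trans
    (closure_minimal (subset_sUnion_of_mem hb) hS)

theorem exists_finite_frontier_subset (h : IsBoxUnion S) :
    ∃ X Y : Set ℝ, X.Finite ∧ Y.Finite ∧ ∀ z ∈ frontier S, z.1 ∈ X ∨ z.2 ∈ Y := by
  obtain ⟨𝓑, hfin, hB, rfl⟩ := h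
  choose! X Y hX hY hXY using fun B hb ↦ (hB B hb).exists_finite_frontier_subset
  refine ⟨⋃ B ∈ 𝓑, X B, ⋃ B ∈ 𝓑, Y B, hfin.biUnion hX, hfin.biUnion hY, fun z ⟨hzc, hzi⟩ ↦ ?_⟩
  rw [hfin.closure_sUnion, mem_iUnion₂] at hzc
  obtain ⟨B, hb, hzB⟩ := hzc
  have hzB' : z ∈ frontier B := ⟨hzB, fun hz ↦ hzi (interior_mono (subset_sUnion_of_mem hb) hz)⟩
  exact (hXY B hb z hzB').imp (mem_biUnion hb) (mem_biUnion hb)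

theorem finite_setOf_isHorizEdgeY (h : IsBoxUnion F) : {y | IsHorizEdgeY F y}.Finite := by
  obtain ⟨X, Y, hX, hY, hXY⟩ := h.exists_finite_frontier_subset
  refine hY.subset fun y ⟨a, b, hab, hy⟩ ↦ ?_
  obtain ⟨x, hx, hxX⟩ := (Icc_infinite hab).exists_notMem_finite hX
  exact (hXY (x, y) (hy ⟨hx, rfl⟩)).resolve_left hxX

theorem finite_setOf_isHorizLineY (h : IsBoxUnion F) (hP : P.Finite) (k : ℕ) :
    {y | IsHorizLineY F P k y}.Finite := by
  have hfin := (finite_Iic k).biUnion fun i _ ↦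
    (h.finite_setOf_isHorizEdgeY.union (hP.image Prod.snd)).biUnion fun y₀ _ ↦
      toFinite {y₀ + (i : ℝ), y₀ - i}
  refine hfin.subset fun y ⟨i, hik, hy⟩ ↦ mem_iUnion₂.2 ⟨i, hik, mem_iUnion₂.2 ?_⟩
  have hdist {y₀ : ℝ} (h : |y - y₀| = i) : y ∈ ({y₀ + (i : ℝ), y₀ - i} : Set ℝ) := by
    rcases eq_or_eq_neg_of_abs_eq h with h | h
    · exact .inl (by linarith)
    · exact .inr (by rw [mem_singleton_iff]; linarith)
  rcases hy with ⟨y₀, hy₀, hyi⟩ | ⟨p, hp, hyi⟩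
  · exact ⟨y₀, .inl hy₀, hdist hyi⟩
  · exact ⟨p.2, .inr ⟨p, hp, rfl⟩, hdist hyi⟩

end IsBoxUnion

theorem IsRectilinearEnv.isBoxUnion {W : Set (ℝ × ℝ)} (hW : IsRectilinearEnv W) :
    IsBoxUnion W := by
  obtain ⟨𝓡, h𝓡, rfl⟩ := hW.2.2.1
  refine ⟨𝓡, 𝓡.finite_toSet, fun S hS ↦ ?_, sUnion_eq_biUnion⟩
  obtain ⟨a, b, c, d, -, -, rfl⟩ := h𝓡 S hS
  exact ⟨_, _, ordConnected_Icc, ordConnected_Icc, rfl⟩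

end BoxUnion

/-! ### The free space -/

section FreeSpace

variable {W : Set (ℝ × ℝ)}

theorem mem_freeSpace_iff {p : ℝ × ℝ} : p ∈ freeSpace W ↔ Metric.closedBall p (1 / 2) ⊆ W := by
  refine ⟨fun hp v hv ↦ ?_, fun hp q hq ↦ hp ?_⟩
  · simpa using hp (v - p) (mem_closedBall_iff_norm.1 hv)
  · exact mem_closedBall_iff_norm.2 (by rwa [add_sub_cancel_left])

open scoped Pointwise in
theorem compl_freeSpace (W : Set (ℝ × ℝ)) :
    (freeSpace W)ᶜ = Wᶜ + Metric.closedBall 0 (1 / 2) := by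
  ext p
  rw [mem_compl_iff, mem_freeSpace_iff, not_subset, mem_add]
  refine exists_congr fun v ↦ ⟨fun ⟨hv, hvW⟩ ↦ ⟨hvW, p - v, ?_, add_sub_cancel v p⟩, ?_⟩
  · exact mem_closedBall_zero_iff.2 (mem_closedBall_iff_norm'.1 hv)
  · rintro ⟨hvW, w, hw, rfl⟩
    exact ⟨by simpa [dist_eq_norm] using hw, hvW⟩

theorem IsBoxUnion.freeSpace (hW : IsBoxUnion W) : IsBoxUnion (freeSpace W) := by
  have hB : IsBox (Metric.closedBall 0 (1 / 2)) :=
    ⟨_, _, (convex_closedBall 0 _).ordConnected, (convex_closedBall 0 _).ordConnected,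
      closedBall_prod_same 0 0 _⟩
  rw [← compl_compl (_root_.freeSpace W), compl_freeSpace]
  exact (hW.compl.add_isBox hB).compl

theorem hasUnitSquareObstacles_freeSpace (hW : IsClosed W) :
    HasUnitSquareObstacles (freeSpace W) := by
  intro z hz
  rw [mem_freeSpace_iff, not_subset] at hz
  obtain ⟨c, hcz, hcW⟩ := hz
  obtain ⟨ε, hε, hεW⟩ := Metric.isOpen_iff.1 hW.isOpen_compl c hcW
  refine ⟨c, 1 / 2 + ε, by linarith, ?_, ?_⟩
  · exact Metric.mem_ball'.2 (lt_of_le_of_lt hcz (by linarith))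
  · refine disjoint_left.2 fun v hvc hvF ↦ ?_
    have hdisj : Disjoint (Metric.closedBall v (1 / 2)) (Metric.ball c ε) :=
      disjoint_left.2 fun w hwv hwc ↦ hεW hwc (mem_freeSpace_iff.1 hvF hwv)
    exact ((disjoint_closedBall_ball_iff (by norm_num) hε).1 hdisj).not_gt hvc

end FreeSpace

/-! ### Corridors -/

section Corridor

variable {F G P S : Set (ℝ × ℝ)} {c p u v : ℝ × ℝ} {xlo xhi ylo yhi : ℝ}

theorem mem_connectedComponentIn_of_uIcc_subset (hu : u ∈ connectedComponentIn S c)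
    (h : uIcc u v ⊆ S) : v ∈ connectedComponentIn S c := by
  have hconn : IsPreconnected (uIcc u v) :=
    uIcc_prod_eq u v ▸ isPreconnected_uIcc.prod isPreconnected_uIcc
  rw [connectedComponentIn_eq hu]
  exact hconn.subset_connectedComponentIn left_mem_uIcc h right_mem_uIcc

theorem Ioo_subset_of_ordConnected_of_mem_closure {α : Type*} [LinearOrder α] [TopologicalSpace α]
    [OrderTopology α] {I : Set α} {a b : α} (hI : I.OrdConnected) (ha : a ∈ closure I)
    (hb : b ∈ closure I) : Ioo a b ⊆ I := by
  intro x hx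
  obtain ⟨i, hix, hi⟩ := mem_closure_iff.1 ha (Iio x) isOpen_Iio hx.1
  obtain ⟨j, hxj, hj⟩ := mem_closure_iff.1 hb (Ioi x) isOpen_Ioi hx.2
  exact hI.out hi hj ⟨(mem_Iio.1 hix).le, (mem_Ioi.1 hxj).le⟩

theorem exists_mk_mem_of_mem_Ioo (hS : IsPreconnected S) (hu : u ∈ closure S) (hv : v ∈ closure S)
    {y : ℝ} (hy : y ∈ Ioo u.2 v.2) : ∃ x, (x, y) ∈ S := by
  have hclosure := image_closure_subset_closure_image (s := S) (continuous_snd (X := ℝ) (Y := ℝ))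
  obtain ⟨w, hw, rfl⟩ := Ioo_subset_of_ordConnected_of_mem_closure
    (hS.image _ continuous_snd.continuousOn).ordConnected
    (hclosure (mem_image_of_mem _ hu)) (hclosure (mem_image_of_mem _ hv)) hy
  exact ⟨w.1, hw⟩

theorem mem_connectedComponentIn_sdiff_primaryHorizSet
    (hu : u ∈ connectedComponentIn (F \ primaryHorizSet F P) c) (huv : uIcc u v ⊆ F)
    (h₂ : u.2 = v.2) : v ∈ connectedComponentIn (F \ primaryHorizSet F P) c := by
  refine mem_connectedComponentIn_of_uIcc_subset hu fun w hw ↦ ⟨huv hw, ?_⟩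
  rw [uIcc_prod_eq, ← h₂, uIcc_self] at hw
  have hw₂ : w.2 = u.2 := hw.2
  rw [primaryHorizSet, mem_ofPred, hw₂]
  exact (connectedComponentIn_subset _ _ hu).2

theorem exists_mem_Icc_abs_sub_le_of_mem_Icc {a b x δ : ℝ} (hab : a ≤ b)
    (hx : x ∈ Icc (a - δ) (b + δ)) (hδ : 0 ≤ δ) : ∃ x' ∈ Icc a b, |x' - x| ≤ δ := by
  refine ⟨max a (min b x), ⟨le_max_left _ _, max_le hab (min_le_left _ _)⟩, ?_⟩
  grind

theorem IsCorridor.isWalledRect (hR : IsCorridor F P (Icc xlo xhi ×ˢ Icc ylo yhi))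
    (hF : HasUnitSquareObstacles F) (hlt : ylo < yhi) : IsWalledRect F xlo xhi ylo yhi := by
  obtain ⟨c, hc, hR⟩ := hR
  set C := connectedComponentIn (F \ primaryHorizSet F P) c
  have hCS : C ⊆ F \ primaryHorizSet F P := connectedComponentIn_subset _ _
  have hCR : C ⊆ Icc xlo xhi ×ˢ Icc ylo yhi := hR ▸ subset_closure
  have hRF : Icc xlo xhi ×ˢ Icc ylo yhi ⊆ F :=
    hR ▸ closure_minimal (hCS.trans sdiff_subset) hF.isClosed
  have hcR := hCR (mem_connectedComponentIn hc)
  have hx : xlo ≤ xhi := hcR.1.1.trans hcR.1.2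
  refine ⟨hx, hlt, hRF, fun z hz hz₁ hz₂ ↦ ?_⟩
  obtain ⟨x, hxC⟩ : ∃ x, (x, z.2) ∈ C :=
    exists_mk_mem_of_mem_Ioo (u := (xlo, ylo)) (v := (xlo, yhi)) isPreconnected_connectedComponentIn
      (hR ▸ ⟨left_mem_Icc.2 hx, left_mem_Icc.2 hlt.le⟩)
      (hR ▸ ⟨left_mem_Icc.2 hx, right_mem_Icc.2 hlt.le⟩) hz₂
  obtain ⟨x', hx', hdist⟩ := exists_mem_Icc_abs_sub_le_of_mem_Icc hx hz₁ zero_le_one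
  have hbox : IsBox (Icc xlo xhi ×ˢ Icc ylo yhi) := ⟨_, _, ordConnected_Icc, ordConnected_Icc, rfl⟩
  have hx'R : (x', z.2) ∈ Icc xlo xhi ×ˢ Icc ylo yhi := ⟨hx', Ioo_subset_Icc_self hz₂⟩
  have hx'C : (x', z.2) ∈ C := mem_connectedComponentIn_sdiff_primaryHorizSet hxC
    ((hbox.uIcc_subset (hCR hxC) hx'R).trans hRF) rfl
  exact (hCR (mem_connectedComponentIn_sdiff_primaryHorizSet hx'C
    (hF.uIcc_subset_of_snd_eq (hCS hx'C).1 hz hdist rfl) rfl)).1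

theorem eventually_mem_connectedComponentIn (hF : LocallyBoxConvex F)
    (hfin : {y | IsHorizLineY F P 1 y}.Finite) (hc : c ∈ F \ primaryHorizSet F P) :
    ∀ᶠ w in 𝓝[F] c, w ∈ connectedComponentIn (F \ primaryHorizSet F P) c := by
  have hlines : ∀ᶠ w in 𝓝 c, uIcc c.2 w.2 ⊆ {y | IsHorizLineY F P 1 y}ᶜ :=
    (tendsto_const_nhds.uIcc (continuous_snd.tendsto c)).eventually
      (Filter.eventually_smallSets_subset.2 (hfin.isClosed.isOpen_compl.mem_nhds hc.2))
  filter_upwards [hF c hc.1, nhdsWithin_le_nhds hlines] with w hwF hw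
  refine mem_connectedComponentIn_of_uIcc_subset (mem_connectedComponentIn hc) fun v hv ↦ ?_
  rw [uIcc_prod_eq] at hv
  exact ⟨hwF (uIcc_prod_eq c w ▸ hv), hw hv.2⟩

theorem LocallyBoxConvex.isHorizEdgeY_of_eventually_snd_eq (hF : LocallyBoxConvex F) (hc : c ∈ F)
    (hacc : AccPt c (Filter.principal F)) (hflat : ∀ᶠ w in 𝓝[F] c, w.2 = c.2) :
    IsHorizEdgeY F c.2 := by
  obtain ⟨ε, hε, hball⟩ := Metric.mem_nhdsWithin_iff.1 (hflat.and (hF c hc))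
  obtain ⟨w, ⟨hwε, hwF⟩, hwc⟩ := accPt_iff_nhds.1 hacc _ (Metric.ball_mem_nhds c hε)
  obtain ⟨hw₂, hcw⟩ := hball ⟨hwε, hwF⟩
  have hw₁ : c.1 ≠ w.1 := fun h ↦ hwc (Prod.ext h.symm hw₂)
  refine ⟨min c.1 w.1, max c.1 w.1, min_lt_max.2 hw₁, fun v ⟨hv₁, hv₂⟩ ↦ ?_⟩
  have hv : v ∈ uIcc c w := by rw [uIcc_prod_eq, hw₂, uIcc_self]; exact ⟨hv₁, hv₂⟩
  have hbox : IsBox (Metric.ball c ε) := ⟨_, _, (convex_ball c.1 ε).ordConnected,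
    (convex_ball c.2 ε).ordConnected, ball_prod_same _ _ _⟩
  have hvε : v ∈ Metric.ball c ε := hbox.uIcc_subset (Metric.mem_ball_self hε) hwε hv
  refine ⟨subset_closure (hcw hv), fun hvi ↦ ?_⟩
  have hint : v ∈ interior (Prod.snd ⁻¹' {c.2}) :=
    mem_interior_iff_mem_nhds.2 (Filter.mem_of_superset (Filter.inter_mem
      (Metric.isOpen_ball.mem_nhds hvε) (mem_interior_iff_mem_nhds.1 hvi)) fun u hu ↦ (hball hu).1)
  rw [← isOpenMap_snd.preimage_interior_eq_interior_preimage continuous_snd,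
    interior_singleton] at hint
  exact hint

theorem IsCorridor.snd_lt (hR : IsCorridor F P (Icc xlo xhi ×ˢ Icc ylo yhi))
    (hF : LocallyBoxConvex F) (hfin : {y | IsHorizLineY F P 1 y}.Finite) (hG : IsPreconnected G)
    (hGF : G ⊆ F) (hRG : Icc xlo xhi ×ˢ Icc ylo yhi ⊆ G) (hp : p ∈ G)
    (hpR : p ∉ Icc xlo xhi ×ˢ Icc ylo yhi) : ylo < yhi := by
  obtain ⟨c, hc, hR⟩ := hR
  have hCR : connectedComponentIn (F \ primaryHorizSet F P) c ⊆ Icc xlo xhi ×ˢ Icc ylo yhi :=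
    hR ▸ subset_closure
  have hcR := hCR (mem_connectedComponentIn hc)
  by_contra! hle
  have hflat : ∀ᶠ w in 𝓝[F] c, w.2 = c.2 :=
    (eventually_mem_connectedComponentIn hF hfin hc).mono fun w hw ↦
      subsingleton_Icc_of_ge hle (hCR hw).2 hcR.2
  have hacc : AccPt c (Filter.principal F) :=
    (hG.preperfect_of_nontrivial ⟨c, hRG hcR, p, hp, fun h ↦ hpR (h ▸ hcR)⟩ c (hRG hcR)).mono
      (Filter.principal_mono.2 hGF)
  exact hc.2 ⟨0, zero_le_one,
    .inl ⟨c.2, hF.isHorizEdgeY_of_eventually_snd_eq hc.1 hacc hflat, by simp⟩⟩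

end Corridor

theorem shortestPath_xMonotone_same_side_general {W P G : Set (ℝ × ℝ)} {xlo xhi ylo yhi : ℝ}
    {p q : ℝ × ℝ} {g : ℝ → ℝ × ℝ} (hW : IsBoxUnion W) (hWc : IsClosed W) (hP : P.Finite)
    (hR : IsCorridor (freeSpace W) P (Icc xlo xhi ×ˢ Icc ylo yhi)) (hG : IsPreconnected G)
    (hGF : G ⊆ freeSpace W ∩ Icc (xlo - 1) (xhi + 1) ×ˢ Icc (ylo - 1) (yhi + 1))
    (hRG : Icc xlo xhi ×ˢ Icc ylo yhi ⊆ G) (hp : p ∈ G) (hq : q ∈ G)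
    (hpq : (yhi < p.2 ∧ yhi < q.2) ∨ (p.2 < ylo ∧ q.2 < ylo))
    (hg : IsShortestPathIn (freeSpace W) p q g) : XMonotone g := by
  have hF := hasUnitSquareObstacles_freeSpace hWc
  have hF' := hW.freeSpace.locallyBoxConvex hF.isClosed
  have hfin := hW.freeSpace.finite_setOf_isHorizLineY hP 1
  have hpR : p ∉ Icc xlo xhi ×ˢ Icc ylo yhi := fun h ↦
    hpq.elim (fun hpq ↦ hpq.1.not_ge h.2.2) fun hpq ↦ hpq.1.not_ge h.2.1
  have hlt := hR.snd_lt hF' hfin hG (hGF.trans inter_subset_left) hRG hp hpR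
  have hwalled := hR.isWalledRect hF hlt
  have hcorner : (xlo, ylo) ∈ Icc xlo xhi ×ˢ Icc ylo yhi :=
    ⟨left_mem_Icc.2 hwalled.fst_le, left_mem_Icc.2 hlt.le⟩
  have hgiant : IsGiantPart (freeSpace W) G xlo xhi ylo yhi :=
    { hwalled with
      isPreconnected := hG
      subset_free := hGF.trans inter_subset_left
      subset_buffer := hGF.trans inter_subset_right
      inter_nonempty := ⟨_, hRG hcorner, hcorner⟩ }
  exact hF.xMonotone_of_pathEDist_le hg (hgiant.pathEDist_le_of_same_side hF hF' hp hq
    (hpq.imp (And.imp le_of_lt le_of_lt) (And.imp le_of_lt le_of_lt)))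

/-- If `p, q` lie in the giant component `γ(R)` and both lie in `R↔⁺`, or
both lie in `R↔⁻`, then every shortest path in `F` from `p` to `q` is x-monotone. -/
theorem shortestPath_xMonotone_same_side
    (W : Set (ℝ × ℝ)) (hW : IsRectilinearEnv W)
    (F : Set (ℝ × ℝ)) (hF : F = freeSpace W)
    (sA sB tA tB : ℝ × ℝ)
    (P : Set (ℝ × ℝ)) (hP : P = {sA, sB, tA, tB})
    (hsA : sA ∈ F) (hsB : sB ∈ F) (htA : tA ∈ F) (htB : tB ∈ F)
    (xlo xhi ylo yhi : ℝ) (R : Set (ℝ × ℝ))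
    (hR : IsCorridor F P R) (hRrect : R = Icc xlo xhi ×ˢ Icc ylo yhi)
    (Rbox : Set (ℝ × ℝ))
    (hRbox : Rbox = Icc (xlo - 1) (xhi + 1) ×ˢ Icc (ylo - 1) (yhi + 1))
    (γR : Set (ℝ × ℝ)) (hγR : IsCompOf (F ∩ Rbox) γR) (hRsub : R ⊆ γR)
    (Rplus Rminus : Set (ℝ × ℝ))
    (hRplus : Rplus = Icc (xlo - 1) (xhi + 1) ×ˢ Ioc yhi (yhi + 1))
    (hRminus : Rminus = Icc (xlo - 1) (xhi + 1) ×ˢ Ico (ylo - 1) ylo)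
    (p q : ℝ × ℝ) (hpγ : p ∈ γR) (hqγ : q ∈ γR)
    (hside : (p ∈ Rplus ∧ q ∈ Rplus) ∨ (p ∈ Rminus ∧ q ∈ Rminus))
    (g : ℝ → ℝ × ℝ) (hg : IsShortestPathIn F p q g) :
    XMonotone g := by
  subst hF hP hRrect hRbox hRplus hRminus
  obtain ⟨c, -, rfl⟩ := hγR
  exact shortestPath_xMonotone_same_side_general hW.isBoxUnion hW.2.1.isClosed (toFinite _) hR
    isPreconnected_connectedComponentIn (connectedComponentIn_subset _ _) hRsub hpγ hqγ
    (hside.imp (fun h ↦ ⟨h.1.2.1, h.2.2.1⟩) fun h ↦ ⟨h.1.2.2, h.2.2.2⟩) hg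

end
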